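/- arXiv:1310.3903 — 4 statements merged into one kernel-verified Lean document; each statement's English description precedes it below -/
import Mathlib

section
/- Let K and K' be regular Cantor sets with expanding maps g and g' respectively, such that HD(K) + HD(K') > 1 and the pair (g, g') belongs to the Moreira–Yoccoz class V. Let f: U → ℝ be a C¹ function on an open set U ⊂ ℝ² containing K × K', and suppose that at some point of K × K' the gradient of f is neither parallel to the x-axis nor to the y-axis (i.e. both partial derivatives are nonzero there). Then the image f(K × K') has non-empty interior in ℝ. -/
noncomputable section
open Set Filter Topology MeasureTheory
open scoped ENNReal Classical

/-- A regular Cantor set, given by a `C^r` (`r > 1`, i.e. `C¹` with Hölder derivative)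
expansive map `g` of type `Σ_𝔹`: branches `I(i,j) = [u i j, v i j] ⊆ I(i) = [a i, b i]`
for allowed transitions, each mapped diffeomorphically onto `I(j)`, with a topologically
mixing transition relation. -/
structure RegCantorSet where
  k : ℕ
  hk : 0 < k
  a : Fin k → ℝ
  b : Fin k → ℝ
  hab : ∀ i, a i < b i
  disj : ∀ i j, i ≠ j → Disjoint (Icc (a i) (b i)) (Icc (a j) (b j))
  trans : Fin k → Fin k → Prop
  u : Fin k → Fin k → ℝ
  v : Fin k → Fin k → ℝ
  branch_sub : ∀ i j, trans i j → a i ≤ u i j ∧ u i j < v i j ∧ v i j ≤ b i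
  branch_disj : ∀ i j j', trans i j → trans i j' → j ≠ j' →
    Disjoint (Icc (u i j) (v i j)) (Icc (u i j') (v i j'))
  g : ℝ → ℝ
  smooth : ContDiff ℝ 1 g
  holder : ∃ C r : NNReal, 0 < r ∧
    HolderOnWith C r (fun x => deriv g x)
      (⋃ i, ⋃ j, ⋃ (_ : trans i j), Icc (u i j) (v i j))
  expanding : ∀ i j, trans i j → ∀ x ∈ Icc (u i j) (v i j), 1 < |deriv g x|
  onto : ∀ i j, trans i j → g '' Icc (u i j) (v i j) = Icc (a j) (b j)
  inj : ∀ i j, trans i j → InjOn g (Icc (u i j) (v i j))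
  mixing : ∃ n₀ : ℕ, ∀ n, n₀ ≤ n → ∀ i j, ∃ w : ℕ → Fin k,
    w 0 = i ∧ w n = j ∧ ∀ m < n, trans (w m) (w (m + 1))

namespace RegCantorSet

variable (C : RegCantorSet)

/-- The domain `⋃ I(i,j)` of the expansive map. -/
def domain : Set ℝ := ⋃ i, ⋃ j, ⋃ (_ : C.trans i j), Icc (C.u i j) (C.v i j)

/-- The regular Cantor set: the maximal invariant set of `g`. -/
def K : Set ℝ := {x | ∀ n : ℕ, C.g^[n] x ∈ C.domain}

/-- The inverse branch `f_{i,j} = (g|_{I(i,j)})⁻¹ : I(j) → I(i,j)`. -/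
def finv (i j : Fin C.k) : ℝ → ℝ := Function.invFunOn C.g (Icc (C.u i j) (C.v i j))

/-- A left-infinite admissible word `θ = (…, θ_{-1}, θ_0)`, recorded as `θ : ℕ → Fin k`
with `θ n = θ_{-n}`. -/
def LeftAdmissible (θ : ℕ → Fin C.k) : Prop := ∀ n : ℕ, C.trans (θ (n + 1)) (θ n)

/-- The composed inverse branch `f_{θⁿ} = f_{θ_{-n},θ_{-n+1}} ∘ ⋯ ∘ f_{θ_{-1},θ_0}`. -/
def fword (θ : ℕ → Fin C.k) : ℕ → ℝ → ℝ
  | 0 => id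
  | n + 1 => C.finv (θ (n + 1)) (θ n) ∘ fword θ n

/-- The normalized inverse branch `k_n^θ = B(θⁿ) ∘ f_{θⁿ}`, where `B(θⁿ)` is the
orientation-compatible affine map from `I(θⁿ)` onto `I(θ₀)`. -/
def limGeomApprox (θ : ℕ → Fin C.k) (n : ℕ) (x : ℝ) : ℝ :=
  let F := C.fword θ n
  let J := F '' Icc (C.a (θ 0)) (C.b (θ 0))
  if MonotoneOn F (Icc (C.a (θ 0)) (C.b (θ 0))) then
    C.a (θ 0) + (F x - sInf J) * (C.b (θ 0) - C.a (θ 0)) / (sSup J - sInf J)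
  else
    C.a (θ 0) + (sSup J - F x) * (C.b (θ 0) - C.a (θ 0)) / (sSup J - sInf J)

/-- The limit geometry `k^θ = lim_n k_n^θ`. -/
def limGeom (θ : ℕ → Fin C.k) (x : ℝ) : ℝ :=
  limUnder atTop (fun n => C.limGeomApprox θ n x)

end RegCantorSet

/-- `h₁` is `ε`-close to `h` in the `C¹` sense on the set `s`. -/
def C1CloseOn (h₁ h : ℝ → ℝ) (s : Set ℝ) (ε : ℝ) : Prop :=
  ∀ x ∈ s, |h₁ x - h x| ≤ ε ∧ |derivWithin h₁ s x - derivWithin h s x| ≤ ε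

/-- The smooth configuration `(h, h')` of the pieces `K(i)`, `K'(i')` is stably
intersecting: every sufficiently small `C¹` perturbation of the configuration still
produces intersecting images of the Cantor set pieces. -/
def StablyIntersecting (C C' : RegCantorSet) (i : Fin C.k) (i' : Fin C'.k)
    (h h' : ℝ → ℝ) : Prop :=
  ∃ ε > 0, ∀ h₁ h₁' : ℝ → ℝ,
    ContDiffOn ℝ 1 h₁ (Icc (C.a i) (C.b i)) →
    ContDiffOn ℝ 1 h₁' (Icc (C'.a i') (C'.b i')) →
    C1CloseOn h₁ h (Icc (C.a i) (C.b i)) ε →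
    C1CloseOn h₁' h' (Icc (C'.a i') (C'.b i')) ε →
    (h₁ '' (C.K ∩ Icc (C.a i) (C.b i)) ∩
      h₁' '' (C'.K ∩ Icc (C'.a i') (C'.b i'))).Nonempty

/-- The Moreira–Yoccoz class `V`: for every relative configuration of limit geometries
`((θ,A), (θ',A'))` (with `A`, `A'` affine) there is a translation `R_t` making
`(R_t ∘ A ∘ k^θ, A' ∘ k'^{θ'})` a stably intersecting configuration. -/
def MemV (C C' : RegCantorSet) : Prop :=
  ∀ θ : ℕ → Fin C.k, C.LeftAdmissible θ →
  ∀ θ' : ℕ → Fin C'.k, C'.LeftAdmissible θ' →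
  ∀ p q p' q' : ℝ, p ≠ 0 → p' ≠ 0 →
  ∃ t : ℝ, StablyIntersecting C C' (θ 0) (θ' 0)
    (fun x => p * C.limGeom θ x + q + t)
    (fun x => p' * C'.limGeom θ' x + q')

/-!
Blow up around the point `z` of `K × K'` along the inverse branches of `g` and `g'` that follow the
itineraries of its coordinates. By bounded distortion the rescaled branches form a `C¹`-precompact
family whose limit points are affine images of limit geometries, and since successive scales have
bounded ratio, the depths in `K` and `K'` can be matched so that the ratio of the two scales has a
nonzero limit.

Near `z` the level set `f = c` is the graph `y = G(x, c)`, so `c` is a value of `f` on `K × K'` as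
soon as `G(·, c)` maps a point of `K` to a point of `K'`. For `c = f(z) + ετ`, at scale `ε` this map
is nearly affine: in the limit it multiplies by `∂G/∂x ≠ 0` and translates by `τ ∂G/∂c`, where
`∂G/∂c ≠ 0`. Membership in `V` supplies `τ₀` for which the limit configuration is stably
intersecting; hence at some small scale `ε` the rescaled configurations still intersect for all `τ`
near `τ₀`, and these `τ` give an interval of values of `f`.
-/

section ContinuousConvergence

variable {ι X β : Type*} [TopologicalSpace X] [UniformSpace β]

theorem tendstoUniformlyOn_iff_forall_tendsto_prod {u : ι → X → β} {f : X → β} {l : Filter ι}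
    {S : Set X} (hS : IsCompact S) (hf : ContinuousOn f S) :
    TendstoUniformlyOn u f l S ↔
      ∀ x ∈ S, Tendsto (fun p : ι × X => u p.1 p.2) (l ×ˢ 𝓝[S] x) (𝓝 (f x)) := by
  rw [← tendstoLocallyUniformlyOn_iff_tendstoUniformlyOn_of_compact hS]
  refine ⟨fun h x hx => ?_, fun h => ?_⟩
  · have h' : TendstoLocallyUniformlyOn (fun p : ι × X => u p.1) f (l ×ˢ 𝓝[S] x) S :=
      fun v hv y hy => (h v hv y hy).imp fun t ht => ⟨ht.1, tendsto_fst.eventually ht.2⟩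
    exact h'.tendsto_comp (hf x hx) hx tendsto_snd
  · refine tendstoLocallyUniformlyOn_iff_forall_tendsto.2 fun x hx => ?_
    have hfx : Tendsto (fun p : ι × X => f p.2) (l ×ˢ 𝓝[S] x) (𝓝 (f x)) :=
      Tendsto.comp (hf x hx) tendsto_snd
    exact (hfx.prodMk_nhds (h x hx)).mono_right (nhds_le_uniformity _)

end ContinuousConvergence

section TendstoC1On

variable {ι ι' E F : Type*} [NormedAddCommGroup E] [NormedSpace ℝ E]
  [NormedAddCommGroup F] [NormedSpace ℝ F]

/-- The `C¹` functions `u i` converge to the `C¹` function `f` along `l` in the `C¹` topology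
on `S ⊆ ℝ`: the functions and their derivatives within `S` converge uniformly on `S`. -/
structure TendstoC1On (u : ι → ℝ → E) (f : ℝ → E) (l : Filter ι) (S : Set ℝ) : Prop where
  contDiffOn : ContDiffOn ℝ 1 f S
  eventually_contDiffOn : ∀ᶠ i in l, ContDiffOn ℝ 1 (u i) S
  tendstoUniformlyOn : TendstoUniformlyOn u f l S
  tendstoUniformlyOn_derivWithin :
    TendstoUniformlyOn (fun i => derivWithin (u i) S) (derivWithin f S) l S

theorem tendsto_clm_apply {l : Filter ι} {A : ι → E →L[ℝ] F} {A₀ : E →L[ℝ] F} {x : ι → E} {x₀ : E}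
    (hA : Tendsto A l (𝓝 A₀)) (hx : Tendsto x l (𝓝 x₀)) :
    Tendsto (fun i => A i (x i)) l (𝓝 (A₀ x₀)) :=
  (isBoundedBilinearMap_apply.continuous.tendsto (A₀, x₀)).comp (hA.prodMk_nhds hx)

variable {u v : ι → ℝ → E} {f g : ℝ → E} {l : Filter ι} {l' : Filter ι'} {S : Set ℝ}

namespace TendstoC1On

theorem comp_tendsto (h : TendstoC1On u f l S) {κ : ι' → ι} (hκ : Tendsto κ l' l) :
    TendstoC1On (fun i => u (κ i)) f l' S where
  contDiffOn := h.contDiffOn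
  eventually_contDiffOn := hκ.eventually h.eventually_contDiffOn
  tendstoUniformlyOn := fun s hs => hκ.eventually (h.tendstoUniformlyOn s hs)
  tendstoUniformlyOn_derivWithin := fun s hs =>
    hκ.eventually (h.tendstoUniformlyOn_derivWithin s hs)

theorem congr (h : TendstoC1On u f l S) (huv : ∀ᶠ i in l, EqOn (v i) (u i) S)
    (hfg : EqOn g f S) : TendstoC1On v g l S where
  contDiffOn := h.contDiffOn.congr hfg
  eventually_contDiffOn := by
    filter_upwards [huv, h.eventually_contDiffOn] with i hi hu using hu.congr hi
  tendstoUniformlyOn :=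
    (h.tendstoUniformlyOn.congr (huv.mono fun _ hi => hi.symm)).congr_right hfg.symm
  tendstoUniformlyOn_derivWithin :=
    (h.tendstoUniformlyOn_derivWithin.congr
      (huv.mono fun _ hi x hx => (derivWithin_congr hi (hi hx)).symm)).congr_right
      fun x hx => (derivWithin_congr hfg (hfg hx)).symm

theorem eventually_c1CloseOn {u : ι → ℝ → ℝ} {f : ℝ → ℝ} (h : TendstoC1On u f l S) {ε : ℝ}
    (hε : 0 < ε) : ∀ᶠ i in l, C1CloseOn (u i) f S ε := by
  filter_upwards [Metric.tendstoUniformlyOn_iff.1 h.tendstoUniformlyOn ε hε,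
    Metric.tendstoUniformlyOn_iff.1 h.tendstoUniformlyOn_derivWithin ε hε] with i h₀ h₁ x hx
  rw [← Real.dist_eq, ← Real.dist_eq, dist_comm, dist_comm (derivWithin _ _ _)]
  exact ⟨(h₀ x hx).le, (h₁ x hx).le⟩

theorem tendsto_prod (h : TendstoC1On u f l S) (hS : IsCompact S) {x : ℝ} (hx : x ∈ S) :
    Tendsto (fun p : ι × ℝ => u p.1 p.2) (l ×ˢ 𝓝[S] x) (𝓝 (f x)) :=
  (tendstoUniformlyOn_iff_forall_tendsto_prod hS h.contDiffOn.continuousOn).1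
    h.tendstoUniformlyOn x hx

theorem tendsto_prod_derivWithin (h : TendstoC1On u f l S) (hS : IsCompact S)
    (hS' : UniqueDiffOn ℝ S) {x : ℝ} (hx : x ∈ S) :
    Tendsto (fun p : ι × ℝ => derivWithin (u p.1) S p.2) (l ×ˢ 𝓝[S] x)
      (𝓝 (derivWithin f S x)) :=
  (tendstoUniformlyOn_iff_forall_tendsto_prod hS
    (h.contDiffOn.continuousOn_derivWithin hS' le_rfl)).1 h.tendstoUniformlyOn_derivWithin x hx

theorem of_tendsto_prod (hS : IsCompact S) (hS' : UniqueDiffOn ℝ S) (hf : ContDiffOn ℝ 1 f S)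
    (hu : ∀ᶠ i in l, ContDiffOn ℝ 1 (u i) S)
    (h : ∀ x ∈ S, Tendsto (fun p : ι × ℝ => u p.1 p.2) (l ×ˢ 𝓝[S] x) (𝓝 (f x)))
    (h' : ∀ x ∈ S, Tendsto (fun p : ι × ℝ => derivWithin (u p.1) S p.2) (l ×ˢ 𝓝[S] x)
      (𝓝 (derivWithin f S x))) : TendstoC1On u f l S where
  contDiffOn := hf
  eventually_contDiffOn := hu
  tendstoUniformlyOn := (tendstoUniformlyOn_iff_forall_tendsto_prod hS hf.continuousOn).2 h
  tendstoUniformlyOn_derivWithin := (tendstoUniformlyOn_iff_forall_tendsto_prod hS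
    (hf.continuousOn_derivWithin hS' le_rfl)).2 h'

theorem clm_apply_add (h : TendstoC1On u f l S) (hS : IsCompact S) (hS' : UniqueDiffOn ℝ S)
    {A : ι → E →L[ℝ] F} {A₀ : E →L[ℝ] F} (hA : Tendsto A l (𝓝 A₀)) {c : ι → F} {c₀ : F}
    (hc : Tendsto c l (𝓝 c₀)) :
    TendstoC1On (fun i s => A i (u i s) + c i) (fun s => A₀ (f s) + c₀) l S := by
  have derivWithin_eq {w : ℝ → E} (hw : ContDiffOn ℝ 1 w S) (B : E →L[ℝ] F) (d : F) {x : ℝ}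
      (hx : x ∈ S) : derivWithin (fun s => B (w s) + d) S x = B (derivWithin w S x) :=
    ((B.hasFDerivAt.comp_hasDerivWithinAt x
      (hw.differentiableOn one_ne_zero x hx).hasDerivWithinAt).add_const d).derivWithin (hS' x hx)
  refine of_tendsto_prod hS hS' ((A₀.contDiff.comp_contDiffOn h.contDiffOn).add contDiffOn_const)
    (h.eventually_contDiffOn.mono fun i hi =>
      ((A i).contDiff.comp_contDiffOn hi).add contDiffOn_const)
    (fun x hx => (tendsto_clm_apply (hA.comp tendsto_fst) (h.tendsto_prod hS hx)).add
      (hc.comp tendsto_fst)) fun x hx => ?_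
  rw [derivWithin_eq h.contDiffOn A₀ c₀ hx]
  refine (tendsto_clm_apply (hA.comp tendsto_fst) (h.tendsto_prod_derivWithin hS hS' hx)).congr' ?_
  filter_upwards [h.eventually_contDiffOn.prod_mk eventually_mem_nhdsWithin] with p hp
  exact (derivWithin_eq hp.1 (A p.1) (c p.1) hp.2).symm

theorem tendstoUniformlyOn_add_smul (h : TendstoC1On u f l S) (hS : IsCompact S) {ε : ι → ℝ}
    (hε : Tendsto ε l (𝓝 0)) (x₀ : E) :
    TendstoUniformlyOn (fun i s => x₀ + ε i • u i s) (fun _ => x₀) l S := by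
  refine (tendstoUniformlyOn_iff_forall_tendsto_prod hS continuousOn_const).2 fun x hx => ?_
  simpa using ((hε.comp tendsto_fst).smul (h.tendsto_prod hS hx)).const_add x₀

theorem rescale (h : TendstoC1On u f l S) (hS : IsCompact S) (hS' : UniqueDiffOn ℝ S)
    {G : E → F} {x₀ : E} (hG : ContDiffAt ℝ 1 G x₀) {ε : ι → ℝ} (hε : Tendsto ε l (𝓝 0))
    (hε' : ∀ᶠ i in l, ε i ≠ 0) :
    TendstoC1On (fun i s => (ε i)⁻¹ • (G (x₀ + ε i • u i s) - G x₀))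
      (fun s => fderiv ℝ G x₀ (f s)) l S := by
  have near_x₀ : ∀ᶠ i in l, ∀ s ∈ S, ContDiffAt ℝ 1 G (x₀ + ε i • u i s) :=
    eventually_prod_principal_iff.1
      ((tendsto_prod_principal_iff.2 (h.tendstoUniformlyOn_add_smul hS hε x₀)).eventually
        (hG.eventually (by simp)))
  refine of_tendsto_prod hS hS' ((fderiv ℝ G x₀).contDiff.comp_contDiffOn h.contDiffOn) ?_
    (fun x hx => ?_) fun x hx => ?_
  · filter_upwards [near_x₀, h.eventually_contDiffOn] with i hi hu
    refine contDiffOn_const.smul (ContDiffOn.sub (fun s hs => ?_) contDiffOn_const)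
    exact (hi s hs).comp_contDiffWithinAt s
      (contDiffWithinAt_const.add (contDiffWithinAt_const.smul (hu s hs)))
  · have hu := h.tendsto_prod hS hx
    refine (hG.differentiableAt one_ne_zero).hasFDerivAt.hasFDerivWithinAt.lim (s := univ)
      (by simpa using (hε.comp tendsto_fst).smul hu) (by simp) (hu.congr' ?_)
    filter_upwards [tendsto_fst.eventually hε'] with p hp using (inv_smul_smul₀ hp _).symm
  · have hfderiv : Tendsto (fun p : ι × ℝ => fderiv ℝ G (x₀ + ε p.1 • u p.1 p.2)) (l ×ˢ 𝓝[S] x)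
        (𝓝 (fderiv ℝ G x₀)) :=
      (hG.fderiv_right (m := 0) (by simp)).continuousAt.tendsto.comp <|
        (tendstoUniformlyOn_iff_forall_tendsto_prod hS continuousOn_const).1
          (h.tendstoUniformlyOn_add_smul hS hε x₀) x hx
    have hlim : derivWithin (fun s => fderiv ℝ G x₀ (f s)) S x =
        fderiv ℝ G x₀ (derivWithin f S x) :=
      ((fderiv ℝ G x₀).hasFDerivAt.comp_hasDerivWithinAt x
        (h.contDiffOn.differentiableOn one_ne_zero x hx).hasDerivWithinAt).derivWithin (hS' x hx)
    rw [hlim]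
    refine (tendsto_clm_apply hfderiv (h.tendsto_prod_derivWithin hS hS' hx)).congr' ?_
    filter_upwards [(near_x₀.and (h.eventually_contDiffOn.and hε')).prod_mk
      eventually_mem_nhdsWithin] with p ⟨⟨hp, hu, hεp⟩, hps⟩
    have hd := (((hp _ hps).differentiableAt one_ne_zero).hasFDerivAt.comp_hasDerivWithinAt _
      (((hu.differentiableOn one_ne_zero _ hps).hasDerivWithinAt.const_smul (ε p.1)).const_add
        x₀)).sub_const (G x₀) |>.const_smul (ε p.1)⁻¹
    rw [map_smul, inv_smul_smul₀ hεp] at hd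
    exact (hd.derivWithin (hS' _ hps)).symm

theorem of_hasDerivWithinAt {a b : ℝ} (hab : a < b) {u' : ι → ℝ → E} {f' : ℝ → E}
    (hu : ∀ᶠ i in l, ∀ s ∈ Icc a b, HasDerivWithinAt (u i) (u' i s) (Icc a b) s)
    (hu' : ∀ᶠ i in l, ContinuousOn (u' i) (Icc a b))
    (hf : ∀ s ∈ Icc a b, HasDerivWithinAt f (f' s) (Icc a b) s)
    (hf' : ContinuousOn f' (Icc a b)) (ha : ∀ᶠ i in l, u i a = f a)
    (h : TendstoUniformlyOn u' f' l (Icc a b)) : TendstoC1On u f l (Icc a b) := by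
  have hS' := uniqueDiffOn_Icc hab
  have derivWithin_eqOn {w w' : ℝ → E}
      (hw : ∀ s ∈ Icc a b, HasDerivWithinAt w (w' s) (Icc a b) s) :
      EqOn w' (derivWithin w (Icc a b)) (Icc a b) :=
    fun s hs => ((hw s hs).derivWithin (hS' s hs)).symm
  have contDiffOn_of {w w' : ℝ → E}
      (hw : ∀ s ∈ Icc a b, HasDerivWithinAt w (w' s) (Icc a b) s)
      (hw' : ContinuousOn w' (Icc a b)) : ContDiffOn ℝ 1 w (Icc a b) :=
    (contDiffOn_one_iff_derivWithin hS').2 ⟨fun s hs => (hw s hs).differentiableWithinAt,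
      hw'.congr (derivWithin_eqOn hw).symm⟩
  refine ⟨contDiffOn_of hf hf', hu.mp (hu'.mono fun i hi' hi => contDiffOn_of hi hi'), ?_,
    (h.congr (hu.mono fun i hi => derivWithin_eqOn hi)).congr_right (derivWithin_eqOn hf)⟩
  refine Metric.tendstoUniformlyOn_iff.2 fun ε hε => ?_
  have hba : 0 < b - a := sub_pos.2 hab
  filter_upwards [hu, ha, Metric.tendstoUniformlyOn_iff.1 h (ε / (2 * (b - a))) (by positivity)]
    with i hi hia hclose s hs
  have hmvt := (convex_Icc a b).norm_image_sub_le_of_norm_hasDerivWithin_le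
    (fun x hx => (hf x hx).sub (hi x hx))
    (fun x hx => (dist_eq_norm (f' x) (u' i x)) ▸ (hclose x hx).le) (left_mem_Icc.2 hab.le) hs
  rw [Pi.sub_apply, Pi.sub_apply, hia, sub_self, sub_zero, ← dist_eq_norm] at hmvt
  calc dist (f s) (u i s) ≤ ε / (2 * (b - a)) * ‖s - a‖ := hmvt
    _ ≤ ε / (2 * (b - a)) * (b - a) := by
      rw [Real.norm_of_nonneg (sub_nonneg.2 hs.1)]
      gcongr
      exact hs.2
    _ < ε := by field_simp; linarith

end TendstoC1On
end TendstoC1On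

theorem abs_log_sub_log_le {x y : ℝ} (hx : 1 ≤ |x|) (hy : 1 ≤ |y|) :
    |Real.log x - Real.log y| ≤ |x - y| := by
  wlog hle : |y| ≤ |x| generalizing x y
  · rw [abs_sub_comm, abs_sub_comm x]
    exact this hy hx (le_of_not_ge hle)
  have hy₀ : 0 < |y| := one_pos.trans_le hy
  rw [← Real.log_abs x, ← Real.log_abs y, abs_of_nonneg (sub_nonneg.2 (Real.log_le_log hy₀ hle)),
    ← Real.log_div (one_pos.trans_le hx).ne' hy₀.ne']
  calc Real.log (|x| / |y|) ≤ |x| / |y| - 1 :=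
        Real.log_le_sub_one_of_pos (div_pos (one_pos.trans_le hx) hy₀)
    _ = (|x| - |y|) / |y| := by rw [sub_div, div_self hy₀.ne']
    _ ≤ |x| - |y| := div_le_self (sub_nonneg.2 hle) hy
    _ ≤ |x - y| := abs_sub_abs_le_abs_sub x y

section MeanValue

variable {a b : ℝ} {F F' : ℝ → ℝ}

theorem slope_comp_eq_mul (F G : ℝ → ℝ) (s t : ℝ) :
    slope (F ∘ G) s t = slope F (G s) (G t) * slope G s t := by
  rcases eq_or_ne (G s) (G t) with heq | hne
  · simp [slope_def_field, heq]
  · have := sub_ne_zero.2 hne.symm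
    simp only [slope_def_field, Function.comp_apply]
    field_simp

theorem exists_eq_slope_of_hasDerivWithinAt
    (hF : ∀ x ∈ Icc a b, HasDerivWithinAt F (F' x) (Icc a b) x) {s t : ℝ} (hs : s ∈ Icc a b)
    (ht : t ∈ Icc a b) (hst : s ≠ t) : ∃ x ∈ Icc a b, F' x = slope F s t := by
  wlog hlt : s < t generalizing s t
  · rw [slope_comm]
    exact this ht hs hst.symm (hst.lt_or_gt.resolve_left hlt)
  have hsub : Icc s t ⊆ Icc a b := Icc_subset_Icc hs.1 ht.2
  obtain ⟨x, hx, hx'⟩ := exists_hasDerivAt_eq_slope F F' hlt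
    (fun x hx => (hF x (hsub hx)).continuousWithinAt.mono hsub) fun x hx =>
      (hF x (hsub (Ioo_subset_Icc_self hx))).hasDerivAt
        (Icc_mem_nhds (hs.1.trans_lt hx.1) (hx.2.trans_le ht.2))
  exact ⟨x, hsub (Ioo_subset_Icc_self hx), hx'.trans (slope_def_field F s t).symm⟩

theorem abs_slope_le_mul_abs_slope {M : ℝ} (hab : a < b)
    (hF : ∀ x ∈ Icc a b, HasDerivWithinAt F (F' x) (Icc a b) x)
    (hM : ∀ x ∈ Icc a b, ∀ y ∈ Icc a b, |F' x| ≤ M * |F' y|) {s t : ℝ} (hs : s ∈ Icc a b)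
    (ht : t ∈ Icc a b) (hst : s ≠ t) : |slope F a b| ≤ M * |slope F s t| := by
  obtain ⟨x, hx, hxF⟩ := exists_eq_slope_of_hasDerivWithinAt hF (left_mem_Icc.2 hab.le)
    (right_mem_Icc.2 hab.le) hab.ne
  obtain ⟨y, hy, hyF⟩ := exists_eq_slope_of_hasDerivWithinAt hF hs ht hst
  rw [← hxF, ← hyF]
  exact hM x hx y hy

theorem exists_hasDerivWithinAt_of_continuousOn {φ : ℝ → ℝ} (hφ : ContinuousOn φ (Icc a b)) :
    ∃ Φ : ℝ → ℝ, ∀ x ∈ Icc a b, HasDerivWithinAt Φ (φ x) (Icc a b) x := by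
  refine ⟨fun x => ∫ y in a..x, φ y, fun x hx => ?_⟩
  have : Fact (x ∈ Icc a b) := ⟨hx⟩
  refine intervalIntegral.integral_hasDerivWithinAt_right ?_
    (hφ.stronglyMeasurableAtFilter_nhdsWithin measurableSet_Icc x) (hφ x hx)
  exact (hφ.mono (Icc_subset_Icc_right hx.2)).intervalIntegrable_of_Icc hx.1

end MeanValue

section Normalize

/-- The composition of `F` with the affine map sending `F a` to `a` and `F b` to `b`; it is the
orientation-compatible normalization of `F` on `[a, b]` when `F a ≠ F b`. -/
def endpointNormalize (a b : ℝ) (F : ℝ → ℝ) (s : ℝ) : ℝ := a + (F s - F a) / slope F a b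

variable {a b : ℝ} {F : ℝ → ℝ}

theorem endpointNormalize_eq_ite (hab : a < b)
    (hF : StrictMonoOn F (Icc a b) ∨ StrictAntiOn F (Icc a b)) (x : ℝ) :
    endpointNormalize a b F x = if MonotoneOn F (Icc a b) then
      a + (F x - sInf (F '' Icc a b)) * (b - a) / (sSup (F '' Icc a b) - sInf (F '' Icc a b))
    else
      a + (sSup (F '' Icc a b) - F x) * (b - a) / (sSup (F '' Icc a b) - sInf (F '' Icc a b)) := by
  have ha := left_mem_Icc.2 hab.le
  have hb := right_mem_Icc.2 hab.le
  rw [endpointNormalize, slope_def_field]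
  rcases hF with hF | hF
  · rw [if_pos hF.monotoneOn, hF.monotoneOn.sInf_image_Icc hab.le,
      hF.monotoneOn.sSup_image_Icc hab.le, div_div_eq_mul_div]
  · have hlt := hF ha hb hab
    rw [if_neg fun h => (h ha hb hab.le).not_gt hlt, hF.antitoneOn.sInf_image_Icc hab.le,
      hF.antitoneOn.sSup_image_Icc hab.le, div_div_eq_mul_div, ← neg_sub (F x), ← neg_sub (F b),
      neg_mul, neg_div_neg_eq]

theorem endpointNormalize_sub_endpointNormalize (a b : ℝ) (F : ℝ → ℝ) (s t : ℝ) :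
    endpointNormalize a b F s - endpointNormalize a b F t = (F s - F t) / slope F a b := by
  rw [endpointNormalize, endpointNormalize, add_sub_add_left_eq_sub, ← sub_div,
    sub_sub_sub_cancel_right]

theorem endpointNormalize_const_mul_sub {P : ℝ} (hP : P ≠ 0) (c : ℝ) :
    endpointNormalize a b (fun s => P * (F s - c)) = endpointNormalize a b F := by
  funext s
  have hslope : slope (fun s => P * (F s - c)) a b = P * slope F a b := by
    simp only [slope_def_field]
    ring
  rw [endpointNormalize, endpointNormalize, hslope, ← mul_sub, sub_sub_sub_cancel_right,
    mul_div_mul_left _ _ hP]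

variable {ι : Type*} {l : Filter ι} {φ : ι → ℝ → ℝ} {P : ι → ℝ} {u : ι → ℝ → ℝ} {f γ : ℝ → ℝ}

theorem tendstoC1On_endpointNormalize (hab : a < b) (hP : ∀ᶠ i in l, P i ≠ 0)
    (hφ : ∀ᶠ i in l, ContinuousOn (φ i) (Icc a b))
    (hu : ∀ᶠ i in l, ∀ s ∈ Icc a b, HasDerivWithinAt (u i) (P i * φ i s) (Icc a b) s)
    (hγ : ContinuousOn γ (Icc a b)) (hf : ∀ s ∈ Icc a b, HasDerivWithinAt f (γ s) (Icc a b) s)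
    (hslope : slope f a b ≠ 0) (h : TendstoUniformlyOn φ γ l (Icc a b)) :
    TendstoC1On (fun i => endpointNormalize a b (u i)) (endpointNormalize a b f) l (Icc a b) := by
  have hS' := uniqueDiffOn_Icc hab
  set e : ι → ℝ → ℝ := fun i s => (P i)⁻¹ * (u i s - u i a)
  have he : TendstoC1On e (fun s => f s - f a) l (Icc a b) := by
    refine .of_hasDerivWithinAt hab ?_ hφ (fun s hs => (hf s hs).sub_const (f a)) hγ
      (Eventually.of_forall fun i => by simp [e]) h
    filter_upwards [hP, hu] with i hPi hi s hs
    simpa [hPi] using ((hi s hs).sub_const (u i a)).const_mul (P i)⁻¹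
  have value_at {x : ℝ} (hx : x ∈ Icc a b) : Tendsto (fun i => e i x) l (𝓝 (f x - f a)) :=
    he.tendstoUniformlyOn.tendsto_at hx
  have hslope_e : Tendsto (fun i => slope (e i) a b) l (𝓝 (slope f a b)) := by
    simpa [slope_def_field] using ((value_at (right_mem_Icc.2 hab.le)).sub
      (value_at (left_mem_Icc.2 hab.le))).div_const (b - a)
  refine (he.clm_apply_add isCompact_Icc hS'
    ((hslope_e.inv₀ hslope).smul_const (ContinuousLinearMap.id ℝ ℝ))
    (tendsto_const_nhds (x := a))).congr ?_ fun s _ => ?_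
  · filter_upwards [hP] with i hPi s _
    rw [← endpointNormalize_const_mul_sub (inv_ne_zero hPi) (u i a)]
    simp [endpointNormalize, e, div_eq_inv_mul, add_comm]
  · simp [endpointNormalize, div_eq_inv_mul, add_comm]

end Normalize

namespace RegCantorSet

variable (C : RegCantorSet)

/-- The interval `I(i)` of the letter `i`. -/
abbrev I (i : Fin C.k) : Set ℝ := Icc (C.a i) (C.b i)

/-- The branch interval `I(i, j)`, which the expansive map sends onto `I(j)`. -/
abbrev J (i j : Fin C.k) : Set ℝ := Icc (C.u i j) (C.v i j)

/-- The last `n` transitions of the word `θ` are allowed, so that `C.fword θ n` is a composition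
of genuine inverse branches. -/
def AdmissibleUpTo (θ : ℕ → Fin C.k) (n : ℕ) : Prop := ∀ m < n, C.trans (θ (m + 1)) (θ m)

variable {C} {i j : Fin C.k} {θ : ℕ → Fin C.k} {m n : ℕ} {s x : ℝ}

section InverseBranches

theorem LeftAdmissible.admissibleUpTo (h : C.LeftAdmissible θ) (n : ℕ) : C.AdmissibleUpTo θ n :=
  fun m _ => h m

theorem AdmissibleUpTo.mono (h : C.AdmissibleUpTo θ n) (hm : m ≤ n) : C.AdmissibleUpTo θ m :=
  fun j hj => h j (hj.trans_le hm)

theorem AdmissibleUpTo.trans_last (h : C.AdmissibleUpTo θ (n + 1)) :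
    C.trans (θ (n + 1)) (θ n) :=
  h n n.lt_succ_self

variable (C) in
theorem left_mem_I (i : Fin C.k) : C.a i ∈ C.I i := left_mem_Icc.2 (C.hab i).le

variable (C) in
theorem right_mem_I (i : Fin C.k) : C.b i ∈ C.I i := right_mem_Icc.2 (C.hab i).le

theorem J_subset_I (h : C.trans i j) : C.J i j ⊆ C.I i :=
  Icc_subset_Icc (C.branch_sub i j h).1 (C.branch_sub i j h).2.2

theorem mem_domain_iff : x ∈ C.domain ↔ ∃ i j, C.trans i j ∧ x ∈ C.J i j := by
  simp only [domain, mem_iUnion, exists_prop]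

theorem mem_domain (h : C.trans i j) (hx : x ∈ C.J i j) : x ∈ C.domain :=
  mem_domain_iff.2 ⟨i, j, h, hx⟩

theorem g_mem (h : C.trans i j) (hx : x ∈ C.J i j) : C.g x ∈ C.I j :=
  (C.onto i j h).subset (mem_image_of_mem _ hx)

theorem finv_mem (h : C.trans i j) (hs : s ∈ C.I j) : C.finv i j s ∈ C.J i j :=
  Function.invFunOn_mem ((C.onto i j h).superset hs)

theorem g_finv (h : C.trans i j) (hs : s ∈ C.I j) : C.g (C.finv i j s) = s :=
  Function.invFunOn_eq ((C.onto i j h).superset hs)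

theorem finv_g (h : C.trans i j) (hx : x ∈ C.J i j) : C.finv i j (C.g x) = x :=
  C.inj i j h (finv_mem h (g_mem h hx)) hx (g_finv h (g_mem h hx))

theorem fword_mem_I (h : C.AdmissibleUpTo θ n) (hs : s ∈ C.I (θ 0)) :
    C.fword θ n s ∈ C.I (θ n) := by
  induction n with
  | zero => exact hs
  | succ n ih => exact J_subset_I h.trans_last (finv_mem h.trans_last (ih (h.mono n.le_succ)))

theorem fword_succ_mem_J (h : C.AdmissibleUpTo θ (n + 1)) (hs : s ∈ C.I (θ 0)) :
    C.fword θ (n + 1) s ∈ C.J (θ (n + 1)) (θ n) :=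
  finv_mem h.trans_last (fword_mem_I (h.mono n.le_succ) hs)

theorem g_fword_succ (h : C.AdmissibleUpTo θ (n + 1)) (hs : s ∈ C.I (θ 0)) :
    C.g (C.fword θ (n + 1) s) = C.fword θ n s :=
  g_finv h.trans_last (fword_mem_I (h.mono n.le_succ) hs)

theorem fword_mem_K (h : C.AdmissibleUpTo θ n) (hs : s ∈ C.I (θ 0)) (hK : s ∈ C.K) :
    C.fword θ n s ∈ C.K := by
  induction n with
  | zero => exact hK
  | succ n ih =>
    rintro (_ | m)
    · exact mem_domain h.trans_last (fword_succ_mem_J h hs)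
    · rw [Function.iterate_succ_apply, g_fword_succ h hs]
      exact ih (h.mono n.le_succ) m

theorem fword_succ_eq_comp_finv (θ : ℕ → Fin C.k) (n : ℕ) :
    C.fword θ (n + 1) = C.fword (fun m => θ (m + 1)) n ∘ C.finv (θ 1) (θ 0) := by
  induction n with
  | zero => rfl
  | succ n ih => rw [fword, ih]; rfl

theorem fword_congr {θ' : ℕ → Fin C.k} (h : ∀ m ≤ n, θ m = θ' m) :
    C.fword θ n = C.fword θ' n := by
  induction n with
  | zero => rfl
  | succ n ih =>
    rw [fword, fword, ih fun m hm => h m (hm.trans n.le_succ), h _ le_rfl, h _ n.le_succ]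

end InverseBranches

section Contraction

theorem isCompact_domain : IsCompact C.domain := by
  refine isCompact_iUnion fun i => isCompact_iUnion fun j => ?_
  by_cases h : C.trans i j
  · simpa [h] using isCompact_Icc
  · simp [h]

variable (C) in
theorem hasDerivAt_g (x : ℝ) : HasDerivAt C.g (deriv C.g x) x :=
  (C.smooth.differentiable one_ne_zero x).hasDerivAt

variable (C) in
theorem continuous_deriv_g : Continuous (deriv C.g) := C.smooth.continuous_deriv le_rfl

theorem one_lt_abs_deriv_g (hx : x ∈ C.domain) : 1 < |deriv C.g x| := by
  obtain ⟨i, j, hij, hx⟩ := mem_domain_iff.1 hx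
  exact C.expanding i j hij x hx

theorem deriv_g_ne_zero (hx : x ∈ C.domain) : deriv C.g x ≠ 0 :=
  abs_pos.1 (one_pos.trans (one_lt_abs_deriv_g hx))

variable (C) in
theorem exists_one_lt_le_abs_deriv_g : ∃ Λ : ℝ, 1 < Λ ∧ ∀ x ∈ C.domain, Λ ≤ |deriv C.g x| := by
  rcases C.domain.eq_empty_or_nonempty with h | h
  · exact ⟨2, one_lt_two, by simp [h]⟩
  · obtain ⟨x, hx, hmin⟩ :=
      isCompact_domain.exists_isMinOn h C.continuous_deriv_g.abs.continuousOn
    exact ⟨_, one_lt_abs_deriv_g hx, fun y hy => hmin hy⟩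

variable (C) in
theorem exists_pos_abs_deriv_g_le : ∃ Λ : ℝ, 0 < Λ ∧ ∀ x ∈ C.domain, |deriv C.g x| ≤ Λ := by
  obtain ⟨M, hM⟩ :=
    isCompact_domain.exists_bound_of_continuousOn C.continuous_deriv_g.continuousOn
  exact ⟨max M 1, by positivity, fun x hx => (hM x hx).trans (le_max_left _ _)⟩

variable (C) in
theorem exists_lipschitzOnWith_finv : ∃ κ : NNReal, κ < 1 ∧
    ∀ i j, C.trans i j → LipschitzOnWith κ (C.finv i j) (C.I j) := by
  obtain ⟨Λ, hΛ, hle⟩ := C.exists_one_lt_le_abs_deriv_g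
  lift Λ to NNReal using by positivity
  refine ⟨Λ⁻¹, inv_lt_one_of_one_lt₀ (mod_cast hΛ), fun i j hij =>
    LipschitzOnWith.of_dist_le_mul fun s hs t ht => ?_⟩
  rcases eq_or_ne (C.finv i j s) (C.finv i j t) with heq | hne
  · simpa [heq] using by positivity
  obtain ⟨x, hx, hslope⟩ := exists_eq_slope_of_hasDerivWithinAt
    (fun x _ => (C.hasDerivAt_g x).hasDerivWithinAt) (finv_mem hij hs) (finv_mem hij ht) hne
  rw [slope_comm, slope_def_field, g_finv hij hs, g_finv hij ht] at hslope
  have hexp := hle x (mem_domain hij hx)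
  rw [hslope, abs_div, le_div_iff₀ (abs_pos.2 (sub_ne_zero.2 hne))] at hexp
  rw [NNReal.coe_inv, inv_mul_eq_div, le_div_iff₀' (by positivity)]
  exact hexp

theorem lipschitzOnWith_fword {κ : NNReal}
    (hκ : ∀ i j, C.trans i j → LipschitzOnWith κ (C.finv i j) (C.I j))
    (h : C.AdmissibleUpTo θ n) : LipschitzOnWith (κ ^ n) (C.fword θ n) (C.I (θ 0)) := by
  induction n with
  | zero => simpa [fword] using LipschitzWith.id.lipschitzOnWith
  | succ n ih =>
    rw [pow_succ']
    exact (hκ _ _ h.trans_last).comp (ih (h.mono n.le_succ))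
      fun s hs => fword_mem_I (h.mono n.le_succ) hs

theorem continuousOn_fword (h : C.AdmissibleUpTo θ n) : ContinuousOn (C.fword θ n) (C.I (θ 0)) := by
  obtain ⟨κ, -, hκ⟩ := C.exists_lipschitzOnWith_finv
  exact (lipschitzOnWith_fword hκ h).continuousOn

theorem hasDerivWithinAt_finv (h : C.trans i j) (hs : s ∈ C.I j) :
    HasDerivWithinAt (C.finv i j) (deriv C.g (C.finv i j s))⁻¹ (C.I j) s := by
  obtain ⟨κ, -, hκ⟩ := C.exists_lipschitzOnWith_finv
  have hinv := ((C.hasDerivAt_g (C.finv i j s)).hasFDerivAt_equiv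
    (deriv_g_ne_zero (mem_domain h (finv_mem h hs)))).hasFDerivWithinAt (s := univ)
  refine (HasFDerivWithinAt.of_local_left_inverse ?_ hinv hs ?_).hasDerivWithinAt.congr_deriv ?_
  · simpa using ((hκ i j h).continuousOn s hs).tendsto
  · filter_upwards [self_mem_nhdsWithin] with t ht using g_finv h ht
  · simp

theorem injOn_finv (h : C.trans i j) : InjOn (C.finv i j) (C.I j) :=
  fun s hs t ht hst => by rw [← g_finv h hs, ← g_finv h ht, hst]

variable (C) in
theorem exists_one_le_mul_abs_slope_finv : ∃ Λ : ℝ, 0 < Λ ∧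
    ∀ i j, C.trans i j → 1 ≤ Λ * |slope (C.finv i j) (C.a j) (C.b j)| := by
  obtain ⟨Λ, hΛ₀, hΛ⟩ := C.exists_pos_abs_deriv_g_le
  refine ⟨Λ, hΛ₀, fun i j hij => ?_⟩
  obtain ⟨s, hs, hslope⟩ := exists_eq_slope_of_hasDerivWithinAt
    (fun s hs => hasDerivWithinAt_finv hij hs) (C.left_mem_I j) (C.right_mem_I j) (C.hab j).ne
  have hmem := mem_domain hij (finv_mem hij hs)
  rw [← hslope, abs_inv, ← div_eq_mul_inv, one_le_div (abs_pos.2 (deriv_g_ne_zero hmem))]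
  exact hΛ _ hmem

theorem hasDerivWithinAt_fword (h : C.AdmissibleUpTo θ n) (hs : s ∈ C.I (θ 0)) :
    HasDerivWithinAt (C.fword θ n)
      (∏ m ∈ Finset.range n, (deriv C.g (C.fword θ (m + 1) s))⁻¹) (C.I (θ 0)) s := by
  induction n with
  | zero => exact hasDerivWithinAt_id s _
  | succ n ih =>
    have hn := h.mono n.le_succ
    rw [Finset.prod_range_succ, mul_comm]
    exact (hasDerivWithinAt_finv h.trans_last (fword_mem_I hn hs)).comp s (ih hn)
      fun x hx => fword_mem_I hn hx

end Contraction

end RegCantorSet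

theorem tendsto_sum_range_of_dominated_convergence {ι G : Type*} [NormedAddCommGroup G]
    [CompleteSpace G] {l : Filter ι} {f : ι → ℕ → G} {g : ℕ → G} {bound : ℕ → ℝ} {n : ι → ℕ}
    (h_sum : Summable bound) (hn : Tendsto n l atTop)
    (hf : ∀ m, Tendsto (fun i => f i m) l (𝓝 (g m)))
    (h_bound : ∀ᶠ i in l, ∀ m < n i, ‖f i m‖ ≤ bound m) (h_nonneg : ∀ m, 0 ≤ bound m) :
    Tendsto (fun i => ∑ m ∈ Finset.range (n i), f i m) l (𝓝 (∑' m, g m)) := by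
  have hsum (i : ι) :
      ∑ m ∈ Finset.range (n i), f i m = ∑' m, if m < n i then f i m else 0 := by
    rw [tsum_eq_sum (s := Finset.range (n i)) fun m hm => if_neg (by simpa using hm)]
    exact Finset.sum_congr rfl fun m hm => (if_pos (Finset.mem_range.1 hm)).symm
  simp_rw [hsum]
  refine tendsto_tsum_of_dominated_convergence h_sum (fun m => (hf m).congr' ?_) ?_
  · filter_upwards [hn.eventually_gt_atTop m] with i hi using (if_pos hi).symm
  · filter_upwards [h_bound] with i hi m
    split_ifs with hm
    · exact hi m hm
    · simpa using h_nonneg m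

theorem eventually_forall_le_eq {ι α : Type*} [TopologicalSpace α] [DiscreteTopology α]
    {l : Filter ι} {w : ι → ℕ → α} {θ : ℕ → α} (hw : Tendsto w l (𝓝 θ)) (m : ℕ) :
    ∀ᶠ i in l, ∀ j ≤ m, w i j = θ j :=
  (eventually_all_finite (finite_Iic m)).2 fun j _ =>
    (tendsto_pi_nhds.1 hw j).eventually ((isOpen_discrete {θ j}).mem_nhds rfl)

namespace RegCantorSet

variable {C : RegCantorSet} {i j : Fin C.k} {θ : ℕ → Fin C.k} {m n : ℕ} {s x y : ℝ}

section Distortion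

variable (C) in
/-- The derivative of the composed inverse branch `C.fword θ n` at the left endpoint of its
domain. -/
def leftDeriv (θ : ℕ → Fin C.k) (n : ℕ) : ℝ :=
  ∏ m ∈ Finset.range n, (deriv C.g (C.fword θ (m + 1) (C.a (θ 0))))⁻¹

variable (C) in
/-- The contribution of the `m`-th inverse branch of the word `θ` to the logarithm of the ratio of
the derivatives at `s` and at the left endpoint. The signs of the derivatives cancel in the ratio,
so `Real.log x = log |x|` is the right convention. -/
def logDistortion (θ : ℕ → Fin C.k) (m : ℕ) (s : ℝ) : ℝ :=
  Real.log (deriv C.g (C.fword θ (m + 1) (C.a (θ 0)))) -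
    Real.log (deriv C.g (C.fword θ (m + 1) s))

theorem leftDeriv_ne_zero (h : C.AdmissibleUpTo θ n) : C.leftDeriv θ n ≠ 0 :=
  Finset.prod_ne_zero_iff.2 fun m hm => inv_ne_zero <| deriv_g_ne_zero <|
    mem_domain (h m (Finset.mem_range.1 hm))
      (fword_succ_mem_J (h.mono (Finset.mem_range.1 hm)) (C.left_mem_I _))

theorem deriv_g_div_deriv_g_pos (h : C.trans i j) (hx : x ∈ C.J i j) (hy : y ∈ C.J i j) :
    0 < deriv C.g x / deriv C.g y := by
  rcases hasDerivWithinAt_forall_lt_or_forall_gt_of_forall_ne (convex_Icc (C.u i j) (C.v i j))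
    (fun x _ => (C.hasDerivAt_g x).hasDerivWithinAt)
    fun x hx => deriv_g_ne_zero (mem_domain h hx) with hneg | hpos
  · exact div_pos_of_neg_of_neg (hneg x hx) (hneg y hy)
  · exact div_pos (hpos x hx) (hpos y hy)

theorem inv_deriv_g_fword (h : C.AdmissibleUpTo θ (m + 1)) (hs : s ∈ C.I (θ 0)) :
    (deriv C.g (C.fword θ (m + 1) s))⁻¹ =
      (deriv C.g (C.fword θ (m + 1) (C.a (θ 0))))⁻¹ * Real.exp (C.logDistortion θ m s) := by
  have hs' := fword_succ_mem_J h hs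
  have ha := fword_succ_mem_J h (C.left_mem_I (θ 0))
  have hs₀ := deriv_g_ne_zero (mem_domain h.trans_last hs')
  have ha₀ := deriv_g_ne_zero (mem_domain h.trans_last ha)
  rw [logDistortion, ← Real.log_div ha₀ hs₀,
    Real.exp_log (deriv_g_div_deriv_g_pos h.trans_last ha hs'), div_eq_mul_inv,
    inv_mul_cancel_left₀ ha₀]

theorem hasDerivWithinAt_fword_exp (h : C.AdmissibleUpTo θ n) (hs : s ∈ C.I (θ 0)) :
    HasDerivWithinAt (C.fword θ n)
      (C.leftDeriv θ n * Real.exp (∑ m ∈ Finset.range n, C.logDistortion θ m s))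
      (C.I (θ 0)) s := by
  refine (hasDerivWithinAt_fword h hs).congr_deriv ?_
  rw [Real.exp_sum, leftDeriv, ← Finset.prod_mul_distrib]
  exact Finset.prod_congr rfl fun m hm =>
    inv_deriv_g_fword (h.mono (Finset.mem_range.1 hm)) hs

theorem continuousOn_logDistortion (h : C.AdmissibleUpTo θ (m + 1)) :
    ContinuousOn (C.logDistortion θ m) (C.I (θ 0)) :=
  continuousOn_const.sub <| ContinuousOn.log
    (C.continuous_deriv_g.comp_continuousOn (continuousOn_fword h))
    fun _ hs => deriv_g_ne_zero (mem_domain h.trans_last (fword_succ_mem_J h hs))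

variable (C) in
theorem exists_abs_logDistortion_le : ∃ B ρ : ℝ, 0 ≤ B ∧ 0 ≤ ρ ∧ ρ < 1 ∧
    ∀ θ m, C.AdmissibleUpTo θ (m + 1) → ∀ s ∈ C.I (θ 0), |C.logDistortion θ m s| ≤ B * ρ ^ m := by
  obtain ⟨κ, hκ₁, hκ⟩ := C.exists_lipschitzOnWith_finv
  obtain ⟨H, r, hr, hH⟩ := C.holder
  set W : ℝ := ∑ i, (C.b i - C.a i)
  have hwidth (i : Fin C.k) : C.b i - C.a i ≤ W :=
    Finset.single_le_sum (f := fun i => C.b i - C.a i) (fun i _ => (sub_pos.2 (C.hab i)).le)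
      (Finset.mem_univ i)
  have hW : 0 ≤ W := Finset.sum_nonneg fun i _ => (sub_pos.2 (C.hab i)).le
  refine ⟨H * W ^ (r : ℝ), (κ : ℝ) ^ (r : ℝ), by positivity, by positivity,
    Real.rpow_lt_one κ.2 (mod_cast hκ₁) (mod_cast hr), fun θ m h s hs => ?_⟩
  have ha := mem_domain h.trans_last (fword_succ_mem_J h (C.left_mem_I (θ 0)))
  have hs' := mem_domain h.trans_last (fword_succ_mem_J h hs)
  have hdist : dist (C.fword θ (m + 1) (C.a (θ 0))) (C.fword θ (m + 1) s) ≤ κ ^ m * W :=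
    calc _ ≤ (κ : ℝ) ^ (m + 1) * dist (C.a (θ 0)) s := by
          exact_mod_cast (lipschitzOnWith_fword hκ h).dist_le_mul _ (C.left_mem_I _) _ hs
      _ ≤ κ ^ m * W := by
          gcongr ?_ * ?_
          · exact pow_le_pow_of_le_one κ.2 (mod_cast hκ₁.le) m.le_succ
          · exact (Real.dist_le_of_mem_Icc (C.left_mem_I _) hs).trans (hwidth _)
  calc |C.logDistortion θ m s|
      ≤ dist (deriv C.g (C.fword θ (m + 1) (C.a (θ 0)))) (deriv C.g (C.fword θ (m + 1) s)) :=
        abs_log_sub_log_le (one_lt_abs_deriv_g ha).le (one_lt_abs_deriv_g hs').le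
    _ ≤ H * (κ ^ m * W) ^ (r : ℝ) := hH.dist_le_of_le ha hs' hdist
    _ = H * W ^ (r : ℝ) * ((κ : ℝ) ^ (r : ℝ)) ^ m := by
        rw [Real.mul_rpow (by positivity) hW, Real.rpow_pow_comm κ.coe_nonneg]
        ring

variable (C) in
theorem exists_abs_sum_logDistortion_le : ∃ D : ℝ, ∀ θ n, C.AdmissibleUpTo θ n →
    ∀ s ∈ C.I (θ 0), |∑ m ∈ Finset.range n, C.logDistortion θ m s| ≤ D := by
  obtain ⟨B, ρ, hB, hρ₀, hρ₁, hbound⟩ := C.exists_abs_logDistortion_le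
  have hsum := (summable_geometric_of_lt_one hρ₀ hρ₁).mul_left B
  refine ⟨∑' m, B * ρ ^ m, fun θ n h s hs => ?_⟩
  calc _ ≤ ∑ m ∈ Finset.range n, |C.logDistortion θ m s| := Finset.abs_sum_le_sum_abs _ _
    _ ≤ ∑ m ∈ Finset.range n, B * ρ ^ m := Finset.sum_le_sum fun m hm =>
        hbound θ m (h.mono (Finset.mem_range.1 hm)) s hs
    _ ≤ ∑' m, B * ρ ^ m := hsum.sum_le_tsum _ fun m _ => by positivity

variable (C) in
theorem exists_abs_slope_fword_le_mul : ∃ M : ℝ, 0 < M ∧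
    ∀ θ n, C.AdmissibleUpTo θ n → ∀ s ∈ C.I (θ 0), ∀ t ∈ C.I (θ 0), s ≠ t →
      |slope (C.fword θ n) (C.a (θ 0)) (C.b (θ 0))| ≤ M * |slope (C.fword θ n) s t| := by
  obtain ⟨D, hD⟩ := C.exists_abs_sum_logDistortion_le
  refine ⟨Real.exp (2 * D), Real.exp_pos _, fun θ n h s hs t ht hst =>
    abs_slope_le_mul_abs_slope (C.hab _) (fun x hx => hasDerivWithinAt_fword_exp h hx)
      (fun x hx y hy => ?_) hs ht hst⟩
  rw [abs_mul, abs_mul, Real.abs_exp, Real.abs_exp, mul_left_comm, ← Real.exp_add]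
  gcongr
  linarith [abs_le.1 (hD θ n h x hx), abs_le.1 (hD θ n h y hy)]

end Distortion

section LimitGeometry

theorem slope_fword_ne_zero (h : C.AdmissibleUpTo θ n) (hx : x ∈ C.I (θ 0)) (hy : y ∈ C.I (θ 0))
    (hxy : x ≠ y) : slope (C.fword θ n) x y ≠ 0 := by
  obtain ⟨s, -, hs⟩ := exists_eq_slope_of_hasDerivWithinAt
    (fun s hs => hasDerivWithinAt_fword_exp h hs) hx hy hxy
  exact hs ▸ mul_ne_zero (leftDeriv_ne_zero h) (Real.exp_ne_zero _)

theorem strictMonoOn_or_strictAntiOn_fword (h : C.AdmissibleUpTo θ n) :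
    StrictMonoOn (C.fword θ n) (C.I (θ 0)) ∨ StrictAntiOn (C.fword θ n) (C.I (θ 0)) := by
  refine (continuousOn_fword h).strictMonoOn_of_injOn_Icc' (C.hab _).le fun s hs t ht hst => ?_
  by_contra hne
  exact slope_fword_ne_zero h hs ht hne (by rw [slope_def_field, hst, sub_self, zero_div])

theorem limGeomApprox_eq_endpointNormalize (h : C.AdmissibleUpTo θ n) :
    C.limGeomApprox θ n = endpointNormalize (C.a (θ 0)) (C.b (θ 0)) (C.fword θ n) :=
  funext fun x =>
    (endpointNormalize_eq_ite (C.hab _) (strictMonoOn_or_strictAntiOn_fword h) x).symm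

variable {ι : Type*} {l : Filter ι} {w : ι → ℕ → Fin C.k} {N : ι → ℕ}

theorem tendsto_sum_logDistortion (hw : Tendsto w l (𝓝 θ)) (hN : Tendsto N l atTop)
    (h : ∀ᶠ i in l, C.AdmissibleUpTo (w i) (N i)) (hθ : C.LeftAdmissible θ)
    (hx : x ∈ C.I (θ 0)) :
    Tendsto (fun p : ι × ℝ => ∑ m ∈ Finset.range (N p.1), C.logDistortion (w p.1) m p.2)
      (l ×ˢ 𝓝[C.I (θ 0)] x) (𝓝 (∑' m, C.logDistortion θ m x)) := by
  obtain ⟨B, ρ, hB, hρ₀, hρ₁, hbound⟩ := C.exists_abs_logDistortion_le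
  refine tendsto_sum_range_of_dominated_convergence
    ((summable_geometric_of_lt_one hρ₀ hρ₁).mul_left B) (hN.comp tendsto_fst) (fun m => ?_) ?_
    fun m => by positivity
  · refine (((continuousOn_logDistortion (hθ.admissibleUpTo _)) x hx).tendsto.comp
      tendsto_snd).congr' ?_
    filter_upwards [tendsto_fst.eventually (eventually_forall_le_eq hw (m + 1))] with p hp
    simp only [Function.comp_apply, logDistortion, fword_congr hp, hp 0 (Nat.zero_le _)]
  · filter_upwards [(h.and (eventually_forall_le_eq hw 0)).prod_mk eventually_mem_nhdsWithin]
      with p ⟨⟨hp, hp₀⟩, hps⟩ m hm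
    exact hbound _ m (hp.mono hm) _ (hp₀ 0 le_rfl ▸ hps)

theorem continuousOn_tsum_logDistortion (hθ : C.LeftAdmissible θ) :
    ContinuousOn (fun s => ∑' m, C.logDistortion θ m s) (C.I (θ 0)) := by
  obtain ⟨B, ρ, -, hρ₀, hρ₁, hbound⟩ := C.exists_abs_logDistortion_le
  exact continuousOn_tsum (fun m => continuousOn_logDistortion (hθ.admissibleUpTo _))
    ((summable_geometric_of_lt_one hρ₀ hρ₁).mul_left B)
    fun m s hs => hbound θ m (hθ.admissibleUpTo _) s hs

theorem tendstoC1On_endpointNormalize_fword (hw : Tendsto w l (𝓝 θ)) (hN : Tendsto N l atTop)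
    (h : ∀ᶠ i in l, C.AdmissibleUpTo (w i) (N i)) (hθ : C.LeftAdmissible θ) {f : ℝ → ℝ}
    (hf : ∀ s ∈ C.I (θ 0),
      HasDerivWithinAt f (Real.exp (∑' m, C.logDistortion θ m s)) (C.I (θ 0)) s) :
    TendstoC1On (fun i => endpointNormalize (C.a (θ 0)) (C.b (θ 0)) (C.fword (w i) (N i)))
      (endpointNormalize (C.a (θ 0)) (C.b (θ 0)) f) l (C.I (θ 0)) := by
  have hadm : ∀ᶠ i in l, C.AdmissibleUpTo (w i) (N i) ∧ w i 0 = θ 0 :=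
    h.and ((eventually_forall_le_eq hw 0).mono fun i hi => hi 0 le_rfl)
  have hcont := continuousOn_tsum_logDistortion hθ
  have hslope : slope f (C.a (θ 0)) (C.b (θ 0)) ≠ 0 := by
    obtain ⟨x, -, hx⟩ := exists_eq_slope_of_hasDerivWithinAt hf (C.left_mem_I _)
      (C.right_mem_I _) (C.hab _).ne
    exact hx ▸ Real.exp_ne_zero _
  refine tendstoC1On_endpointNormalize (C.hab _)
    (P := fun i => C.leftDeriv (w i) (N i))
    (φ := fun i s => Real.exp (∑ m ∈ Finset.range (N i), C.logDistortion (w i) m s))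
    (h.mono fun i hi => leftDeriv_ne_zero hi) ?_ ?_ hcont.rexp hf hslope ?_
  · filter_upwards [hadm] with i ⟨hi, hi₀⟩
    rw [← hi₀]
    exact (continuousOn_finsetSum _ fun m hm =>
      continuousOn_logDistortion (hi.mono (Finset.mem_range.1 hm))).rexp
  · filter_upwards [hadm] with i ⟨hi, hi₀⟩
    rw [← hi₀]
    exact fun s hs => hasDerivWithinAt_fword_exp hi hs
  · exact (tendstoUniformlyOn_iff_forall_tendsto_prod isCompact_Icc hcont.rexp).2 fun x hx =>
      (tendsto_sum_logDistortion hw hN h hθ hx).rexp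

theorem tendstoC1On_limGeom (hw : Tendsto w l (𝓝 θ)) (hN : Tendsto N l atTop)
    (h : ∀ᶠ i in l, C.AdmissibleUpTo (w i) (N i)) (hθ : C.LeftAdmissible θ) :
    TendstoC1On (fun i => endpointNormalize (C.a (θ 0)) (C.b (θ 0)) (C.fword (w i) (N i)))
      (C.limGeom θ) l (C.I (θ 0)) := by
  obtain ⟨f, hf⟩ :=
    exists_hasDerivWithinAt_of_continuousOn (continuousOn_tsum_logDistortion hθ).rexp
  refine (tendstoC1On_endpointNormalize_fword hw hN h hθ hf).congr
    (Eventually.of_forall fun i => eqOn_refl _ _) fun s hs => Tendsto.limUnder_eq ?_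
  simp_rw [limGeomApprox_eq_endpointNormalize (hθ.admissibleUpTo _)]
  exact (tendstoC1On_endpointNormalize_fword tendsto_const_nhds tendsto_id
    (Eventually.of_forall hθ.admissibleUpTo) hθ hf).tendstoUniformlyOn.tendsto_at hs

end LimitGeometry

end RegCantorSet

namespace RegCantorSet

section BlowUp

variable (C : RegCantorSet)

/-- The maps `φ n` send the piece of the Cantor set in `C.I i` back into the Cantor set and, seen
around `x` at the scale `ε n → 0`, converge in `C¹(C.I i)` to `k` along `l`. -/
structure IsBlowUp {ι : Type*} (x : ℝ) (i : Fin C.k) (φ : ι → ℝ → ℝ) (ε : ι → ℝ) (k : ℝ → ℝ)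
    (l : Filter ι) : Prop where
  tendsto_scale : Tendsto ε l (𝓝 0)
  scale_ne_zero : ∀ᶠ n in l, ε n ≠ 0
  mapsTo : ∀ᶠ n in l, MapsTo (φ n) (C.K ∩ C.I i) C.K
  tendstoC1On : TendstoC1On (fun n s => (φ n s - x) / ε n) k l (C.I i)

variable {C} {ι ι' : Type*} {x : ℝ} {i : Fin C.k} {φ : ι → ℝ → ℝ} {ε ε' : ι → ℝ} {k : ℝ → ℝ}
  {l : Filter ι} {l' : Filter ι'}

namespace IsBlowUp

theorem comp_tendsto (h : C.IsBlowUp x i φ ε k l) {κ : ι' → ι} (hκ : Tendsto κ l' l) :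
    C.IsBlowUp x i (fun n => φ (κ n)) (fun n => ε (κ n)) k l' where
  tendsto_scale := h.tendsto_scale.comp hκ
  scale_ne_zero := hκ.eventually h.scale_ne_zero
  mapsTo := hκ.eventually h.mapsTo
  tendstoC1On := h.tendstoC1On.comp_tendsto hκ

theorem change_scale (h : C.IsBlowUp x i φ ε k l) (hε' : Tendsto ε' l (𝓝 0))
    (hε'₀ : ∀ᶠ n in l, ε' n ≠ 0) {ρ : ℝ} (hρ : Tendsto (fun n => ε n / ε' n) l (𝓝 ρ)) :
    C.IsBlowUp x i φ ε' (fun s => ρ * k s) l where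
  tendsto_scale := hε'
  scale_ne_zero := hε'₀
  mapsTo := h.mapsTo
  tendstoC1On := by
    have hclm := (ContinuousLinearMap.mul ℝ ℝ).continuous.tendsto ρ
    refine (h.tendstoC1On.clm_apply_add isCompact_Icc (uniqueDiffOn_Icc (C.hab i))
      (hclm.comp hρ) (tendsto_const_nhds (x := (0 : ℝ)))).congr ?_ fun s _ => (add_zero _).symm
    filter_upwards [h.scale_ne_zero] with n hn s _
    simp only [Function.comp_apply, ContinuousLinearMap.mul_apply', add_zero]
    rw [mul_comm, div_mul_div_cancel₀ hn]

end IsBlowUp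

end BlowUp

section Itinerary

variable (C : RegCantorSet)

/-- `i` is the itinerary of `x` under the expansive map: the `n`-th iterate of `x` lies in the
branch interval of the allowed transition from `i n` to `i (n + 1)`. -/
def IsItinerary (x : ℝ) (i : ℕ → Fin C.k) : Prop :=
  ∀ n, C.trans (i n) (i (n + 1)) ∧ C.g^[n] x ∈ C.J (i n) (i (n + 1))

variable {C} in
/-- The first `n + 1` letters of the itinerary `i`, read backwards from time `n`. Truncated
subtraction makes the word constant after these letters. -/
def pastWord (i : ℕ → Fin C.k) (n m : ℕ) : Fin C.k := i (n - m)

/-- The inverse branch of the `n`-th iterate of the expansive map along the itinerary `i`. -/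
def invBranch (i : ℕ → Fin C.k) (n : ℕ) : ℝ → ℝ := C.fword (pastWord i n) n

/-- The signed contraction ratio of `C.invBranch i n`, comparing its image with its domain. -/
def branchScale (i : ℕ → Fin C.k) (n : ℕ) : ℝ := slope (C.invBranch i n) (C.a (i n)) (C.b (i n))

variable {C} {i : ℕ → Fin C.k} {x : ℝ}

theorem exists_isItinerary (hx : x ∈ C.K) : ∃ i, C.IsItinerary x i := by
  choose i j hij hmem using fun n => mem_domain_iff.1 (hx n)
  have j_eq (n : ℕ) : j n = i (n + 1) := by
    by_contra hne
    have hj := g_mem (hij n) (hmem n)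
    rw [← Function.iterate_succ_apply' C.g n x] at hj
    exact disjoint_left.1 (C.disj _ _ hne) hj (J_subset_I (hij (n + 1)) (hmem (n + 1)))
  exact ⟨i, fun n => ⟨j_eq n ▸ hij n, j_eq n ▸ hmem n⟩⟩

theorem invBranch_succ (i : ℕ → Fin C.k) (n : ℕ) :
    C.invBranch i (n + 1) = C.invBranch i n ∘ C.finv (i n) (i (n + 1)) := by
  rw [invBranch, fword_succ_eq_comp_finv]
  simp only [pastWord, Nat.add_sub_add_right, Nat.add_sub_cancel, Nat.sub_zero]
  rfl

namespace IsItinerary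

variable (h : C.IsItinerary x i) (n : ℕ)
include h

theorem iterate_mem_I : C.g^[n] x ∈ C.I (i n) := J_subset_I (h n).1 (h n).2

theorem admissibleUpTo_pastWord : C.AdmissibleUpTo (pastWord i n) n := fun m hm => by
  simpa only [pastWord, ← Nat.sub_sub, Nat.sub_add_cancel (Nat.sub_pos_of_lt hm)] using
    (h (n - (m + 1))).1

theorem invBranch_mem_K {s : ℝ} (hs : s ∈ C.K ∩ C.I (i n)) : C.invBranch i n s ∈ C.K :=
  fword_mem_K (h.admissibleUpTo_pastWord n) hs.2 hs.1

theorem invBranch_iterate : C.invBranch i n (C.g^[n] x) = x := by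
  induction n with
  | zero => rfl
  | succ n ih =>
    rw [invBranch_succ, Function.comp_apply, Function.iterate_succ_apply', finv_g (h n).1 (h n).2,
      ih]

theorem branchScale_ne_zero : C.branchScale i n ≠ 0 :=
  slope_fword_ne_zero (h.admissibleUpTo_pastWord n) (C.left_mem_I (i n)) (C.right_mem_I (i n))
    (C.hab _).ne

theorem exists_mul_abs_branchScale_le :
    ∃ c > 0, ∀ n, c * |C.branchScale i n| ≤ |C.branchScale i (n + 1)| := by
  obtain ⟨M, hM₀, hM⟩ := C.exists_abs_slope_fword_le_mul
  obtain ⟨Λ, hΛ₀, hΛ⟩ := C.exists_one_le_mul_abs_slope_finv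
  refine ⟨(M * Λ)⁻¹, by positivity, fun n => ?_⟩
  have hij := (h n).1
  have ha := C.left_mem_I (i (n + 1))
  have hb := C.right_mem_I (i (n + 1))
  have hF := hM _ n (h.admissibleUpTo_pastWord n) _ (J_subset_I hij (finv_mem hij ha)) _
    (J_subset_I hij (finv_mem hij hb)) ((injOn_finv hij).ne ha hb (C.hab _).ne)
  rw [inv_mul_le_iff₀ (by positivity), branchScale, branchScale, invBranch_succ,
    slope_comp_eq_mul, abs_mul, mul_mul_mul_comm]
  exact hF.trans (le_mul_of_one_le_right (by positivity) (hΛ _ _ hij))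

theorem tendsto_branchScale : Tendsto (C.branchScale i) atTop (𝓝 0) := by
  obtain ⟨κ, hκ₁, hκ⟩ := C.exists_lipschitzOnWith_finv
  refine squeeze_zero_norm (fun n => ?_)
    (tendsto_pow_atTop_nhds_zero_of_lt_one κ.coe_nonneg (mod_cast hκ₁))
  have hlip := (lipschitzOnWith_fword hκ (h.admissibleUpTo_pastWord n)).dist_le_mul _
    (C.right_mem_I (i n)) _ (C.left_mem_I (i n))
  rw [branchScale, slope_def_field, norm_div, ← dist_eq_norm, ← dist_eq_norm,
    div_le_iff₀ (dist_pos.2 (C.hab _).ne')]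
  exact_mod_cast hlip

theorem leftAdmissible_of_tendsto {θ : ℕ → Fin C.k} {l : Filter ℕ} [l.NeBot] (hl : l ≤ atTop)
    (hθ : Tendsto (pastWord i) l (𝓝 θ)) : C.LeftAdmissible θ := fun m => by
  obtain ⟨n, hn, hmn⟩ :=
    ((eventually_forall_le_eq hθ (m + 1)).and (hl (eventually_gt_atTop m))).exists
  rw [← hn _ le_rfl, ← hn _ m.le_succ]
  exact h.admissibleUpTo_pastWord n m hmn

theorem exists_isBlowUp (𝓤 : Ultrafilter ℕ) (h𝓤 : (𝓤 : Filter ℕ) ≤ atTop) :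
    ∃ θ, C.LeftAdmissible θ ∧ ∃ q, C.IsBlowUp x (θ 0) (C.invBranch i) (C.branchScale i)
      (fun s => C.limGeom θ s - q) 𝓤 := by
  obtain ⟨θ, -, hθ⟩ := isCompact_univ.ultrafilter_le_nhds' (𝓤.map (pastWord i)) univ_mem
  have hadm : C.LeftAdmissible θ := h.leftAdmissible_of_tendsto h𝓤 hθ
  have hi₀ : ∀ᶠ n in 𝓤, i n = θ 0 :=
    (eventually_forall_le_eq hθ 0).mono fun n hn => hn 0 le_rfl
  have horbit : ∀ᶠ n in 𝓤, C.g^[n] x ∈ C.I (θ 0) :=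
    hi₀.mono fun n hn => hn ▸ h.iterate_mem_I n
  obtain ⟨σ, hσ, hσlim⟩ := isCompact_Icc.ultrafilter_le_nhds' (𝓤.map fun n => C.g^[n] x) horbit
  have hlim := tendstoC1On_limGeom hθ (tendsto_id'.2 h𝓤)
    (Eventually.of_forall h.admissibleUpTo_pastWord) hadm
  have hq := (hlim.tendsto_prod isCompact_Icc hσ).comp
    (tendsto_id.prodMk (tendsto_nhdsWithin_iff.2 ⟨hσlim, horbit⟩))
  refine ⟨θ, hadm, C.limGeom θ σ, h.tendsto_branchScale.mono_left h𝓤,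
    Eventually.of_forall h.branchScale_ne_zero,
    hi₀.mono fun n hn s hs => h.invBranch_mem_K n (hn.symm ▸ hs),
    (hlim.clm_apply_add isCompact_Icc (uniqueDiffOn_Icc (C.hab _))
      (tendsto_const_nhds (x := ContinuousLinearMap.id ℝ ℝ)) hq.neg).congr ?_
      fun s _ => sub_eq_add_neg _ _⟩
  filter_upwards [hi₀] with n hn s _
  have hblow := endpointNormalize_sub_endpointNormalize (C.a (i n)) (C.b (i n))
    (C.invBranch i n) s (C.g^[n] x)
  rw [h.invBranch_iterate, hn] at hblow
  simp only [branchScale, hn]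
  exact hblow.symm.trans (sub_eq_add_neg _ _)

end IsItinerary

end Itinerary

end RegCantorSet

section Scales

variable {L L' : ℕ → ℝ} {c : ℝ}

theorem exists_tendsto_atTop_abs_div_mem_Icc (hc : 0 < c) (hL₀ : ∀ n, L n ≠ 0)
    (hL'₀ : ∀ n, L' n ≠ 0) (hL : Tendsto L atTop (𝓝 0)) (hL' : Tendsto L' atTop (𝓝 0))
    (hratio : ∀ n, c * |L' n| ≤ |L' (n + 1)|) :
    ∃ m : ℕ → ℕ, Tendsto m atTop atTop ∧ ∀ᶠ n in atTop, |L n / L' (m n)| ∈ Icc 1 c⁻¹ := by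
  have hex (n : ℕ) : ∃ m, |L' m| ≤ |L n| :=
    ((hL'.abs.eventually_lt_const (abs_zero.trans_lt (abs_pos.2 (hL₀ n)))).exists).imp
      fun _ => le_of_lt
  have hlarge (M : ℕ) : ∀ᶠ n in atTop, M ≤ Nat.find (hex n) := by
    have : ∀ᶠ n in atTop, ∀ j ∈ Finset.range M, |L n| < |L' j| :=
      (eventually_all_finset _).2 fun j _ =>
        hL.abs.eventually_lt_const (abs_zero.trans_lt (abs_pos.2 (hL'₀ j)))
    filter_upwards [this] with n hn
    exact (Nat.le_find_iff _ _).2 fun j hj => not_le.2 (hn j (Finset.mem_range.2 hj))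
  refine ⟨fun n => Nat.find (hex n), tendsto_atTop.2 hlarge, ?_⟩
  filter_upwards [hlarge 1] with n hn
  have hpos := abs_pos.2 (hL'₀ (Nat.find (hex n)))
  have hprev : |L n| < |L' (Nat.find (hex n) - 1)| :=
    not_le.1 (Nat.find_min (hex n) (Nat.sub_lt hn one_pos))
  rw [abs_div, mem_Icc, le_div_iff₀ hpos, one_mul, div_le_iff₀ hpos, le_inv_mul_iff₀ hc]
  refine ⟨Nat.find_spec (hex n), ?_⟩
  calc c * |L n| ≤ c * |L' (Nat.find (hex n) - 1)| := by gcongr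
    _ ≤ |L' (Nat.find (hex n) - 1 + 1)| := hratio _
    _ = |L' (Nat.find (hex n))| := by rw [Nat.sub_add_cancel hn]

theorem exists_tendsto_atTop_tendsto_div (𝓤 : Ultrafilter ℕ) (h𝓤 : (𝓤 : Filter ℕ) ≤ atTop)
    (hc : 0 < c) (hL₀ : ∀ n, L n ≠ 0) (hL'₀ : ∀ n, L' n ≠ 0) (hL : Tendsto L atTop (𝓝 0))
    (hL' : Tendsto L' atTop (𝓝 0)) (hratio : ∀ n, c * |L' n| ≤ |L' (n + 1)|) :
    ∃ m : ℕ → ℕ, Tendsto m 𝓤 atTop ∧ ∃ ρ ≠ 0, Tendsto (fun n => L n / L' (m n)) 𝓤 (𝓝 ρ) := by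
  obtain ⟨m, hm, hmem⟩ := exists_tendsto_atTop_abs_div_mem_Icc hc hL₀ hL'₀ hL hL' hratio
  replace hmem := hmem.filter_mono h𝓤
  have hbdd : ∀ᶠ n in 𝓤, L n / L' (m n) ∈ Icc (-c⁻¹) c⁻¹ := hmem.mono fun n hn => abs_le.1 hn.2
  obtain ⟨ρ, -, hρ⟩ := isCompact_Icc.ultrafilter_le_nhds' (𝓤.map fun n => L n / L' (m n)) hbdd
  refine ⟨m, hm.mono_left h𝓤, ρ, ?_, hρ⟩
  have hone : 1 ≤ |ρ| := ge_of_tendsto (Tendsto.abs hρ) (hmem.mono fun n hn => hn.1)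
  exact abs_pos.1 (one_pos.trans_le hone)

end Scales

namespace RegCantorSet

variable {C C' : RegCantorSet} {x x' : ℝ}

theorem exists_isBlowUp_pair (hx : x ∈ C.K) (hx' : x' ∈ C'.K) :
    ∃ (θ : ℕ → Fin C.k) (θ' : ℕ → Fin C'.k), C.LeftAdmissible θ ∧ C'.LeftAdmissible θ' ∧
      ∃ (𝓤 : Ultrafilter ℕ) (ε : ℕ → ℝ) (φ φ' : ℕ → ℝ → ℝ) (ρ q q' : ℝ), ρ ≠ 0 ∧
        C.IsBlowUp x (θ 0) φ ε (fun s => ρ * (C.limGeom θ s - q)) 𝓤 ∧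
        C'.IsBlowUp x' (θ' 0) φ' ε (fun s => C'.limGeom θ' s - q') 𝓤 := by
  obtain ⟨i, hi⟩ := exists_isItinerary hx
  obtain ⟨i', hi'⟩ := exists_isItinerary hx'
  obtain ⟨c, hc, hratio⟩ := hi'.exists_mul_abs_branchScale_le
  have h𝓤 : ((hyperfilter ℕ : Ultrafilter ℕ) : Filter ℕ) ≤ atTop := Nat.hyperfilter_le_atTop
  obtain ⟨m, hm, ρ, hρ₀, hρ⟩ := exists_tendsto_atTop_tendsto_div (hyperfilter ℕ) h𝓤 hc
    hi.branchScale_ne_zero hi'.branchScale_ne_zero hi.tendsto_branchScale hi'.tendsto_branchScale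
    hratio
  obtain ⟨θ, hθ, q, hblow⟩ := hi.exists_isBlowUp (hyperfilter ℕ) h𝓤
  obtain ⟨θ', hθ', q', hblow'⟩ := hi'.exists_isBlowUp ((hyperfilter ℕ).map m) hm
  have hblow'm := hblow'.comp_tendsto (κ := m) (l' := (hyperfilter ℕ : Filter ℕ)) tendsto_map
  exact ⟨θ, θ', hθ, hθ', hyperfilter ℕ, _, _, _, ρ, q, q', hρ₀,
    hblow.change_scale hblow'm.tendsto_scale hblow'm.scale_ne_zero hρ, hblow'm⟩

end RegCantorSet

section ImplicitFunction

variable {E₁ E₂ F : Type*} [NormedAddCommGroup E₁] [NormedSpace ℝ E₁] [NormedAddCommGroup E₂]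
  [NormedSpace ℝ E₂] [NormedAddCommGroup F] [NormedSpace ℝ F] {f : E₁ × E₂ → F} {z : E₁ × E₂}

theorem exists_contDiffAt_eventually_apply_eq [CompleteSpace E₁] [CompleteSpace E₂]
    [CompleteSpace F] {n : WithTop ℕ∞} (hn : n ≠ 0) (hf : ContDiffAt ℝ n f z)
    (hinv : (fderiv ℝ f z ∘L .inr ℝ E₁ E₂).IsInvertible) :
    ∃ G : E₁ × F → E₂, ContDiffAt ℝ n G (z.1, f z) ∧ G (z.1, f z) = z.2 ∧
      ∀ᶠ w in 𝓝 (z.1, f z), f (w.1, G w) = w.2 := by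
  let Φ : (E₁ × F) × E₂ → F := fun p => f (p.1.1, p.2) - p.1.2
  let u : (E₁ × F) × E₂ := ((z.1, f z), z.2)
  have hΦ : ContDiffAt ℝ n Φ u :=
    (ContDiffAt.comp u (g := f) (f := fun p : (E₁ × F) × E₂ => (p.1.1, p.2)) hf
      (by fun_prop)).sub (by fun_prop)
  have hΦ' : HasFDerivAt (fun y => Φ (u.1, y)) (fderiv ℝ Φ u ∘L .inr ℝ (E₁ × F) E₂) u.2 :=
    (hΦ.differentiableAt hn).hasFDerivAt.comp u.2 (hasFDerivAt_prodMk_right _ _)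
  have hf' : HasFDerivAt (fun y => Φ (u.1, y)) (fderiv ℝ f z ∘L .inr ℝ E₁ E₂) u.2 :=
    ((hf.differentiableAt hn).hasFDerivAt.comp z.2 (hasFDerivAt_prodMk_right _ _)).sub_const _
  rw [← hΦ'.unique hf'] at hinv
  refine ⟨hΦ.implicitFunction hn hinv, hΦ.contDiffAt_implicitFunction hn hinv,
    hΦ.implicitFunction_apply_self hn hinv, ?_⟩
  filter_upwards [hΦ.eventually_apply_implicitFunction hn hinv] with w hw
  simpa [Φ, u, sub_eq_zero] using hw

theorem fderiv_apply_fderiv_of_eventually_apply_eq {G : E₁ × F → E₂} (hf : DifferentiableAt ℝ f z)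
    (hG : DifferentiableAt ℝ G (z.1, f z)) (hz : G (z.1, f z) = z.2)
    (hfG : ∀ᶠ w in 𝓝 (z.1, f z), f (w.1, G w) = w.2) (w : E₁ × F) :
    fderiv ℝ f z (w.1, fderiv ℝ G (z.1, f z) w) = w.2 := by
  have hf' : HasFDerivAt f (fderiv ℝ f z) (z.1, G (z.1, f z)) := hz.symm ▸ hf.hasFDerivAt
  have hcomp := hf'.comp (z.1, f z) (hasFDerivAt_fst.prodMk hG.hasFDerivAt)
  exact DFunLike.congr_fun ((hcomp.congr_of_eventuallyEq (hfG.mono fun _ => Eq.symm)).unique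
    hasFDerivAt_snd) w

theorem isInvertible_of_apply_one_ne_zero {𝕜 : Type*} [NontriviallyNormedField 𝕜] {L : 𝕜 →L[𝕜] 𝕜}
    (hL : L 1 ≠ 0) : L.IsInvertible := by
  refine ⟨ContinuousLinearEquiv.unitsEquivAut 𝕜 (Units.mk0 _ hL), ?_⟩
  ext
  simp

theorem exists_implicit_of_fderiv_ne_zero {f : ℝ × ℝ → ℝ} {z : ℝ × ℝ} (hf : ContDiffAt ℝ 1 f z)
    (hdx : fderiv ℝ f z (1, 0) ≠ 0) (hdy : fderiv ℝ f z (0, 1) ≠ 0) :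
    ∃ G : ℝ × ℝ → ℝ, ContDiffAt ℝ 1 G (z.1, f z) ∧ G (z.1, f z) = z.2 ∧
      (∀ᶠ w in 𝓝 (z.1, f z), f (w.1, G w) = w.2) ∧
      fderiv ℝ G (z.1, f z) (1, 0) ≠ 0 ∧ fderiv ℝ G (z.1, f z) (0, 1) ≠ 0 := by
  obtain ⟨G, hG, hGz, hfG⟩ := exists_contDiffAt_eventually_apply_eq one_ne_zero hf
    (isInvertible_of_apply_one_ne_zero (L := fderiv ℝ f z ∘L .inr ℝ ℝ ℝ) hdy)
  have hchain := fderiv_apply_fderiv_of_eventually_apply_eq (hf.differentiableAt one_ne_zero)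
    (hG.differentiableAt one_ne_zero) hGz hfG
  refine ⟨G, hG, hGz, hfG, fun h₀ => ?_, fun h₀ => ?_⟩
  · have := hchain (1, 0)
    rw [h₀] at this
    exact hdx this
  · have := hchain (0, 1)
    rw [h₀, ← Prod.zero_eq_mk, map_zero] at this
    exact zero_ne_one this

end ImplicitFunction

section NonemptyInterior

theorem interior_nonempty_of_eventually_add_mul_mem {𝕜 : Type*} [Field 𝕜] [TopologicalSpace 𝕜]
    [IsTopologicalRing 𝕜] {B : Set 𝕜} {c ε τ₀ : 𝕜} (hε : ε ≠ 0)
    (h : ∀ᶠ τ in 𝓝 τ₀, c + ε * τ ∈ B) : (interior B).Nonempty := by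
  refine ⟨c + ε * τ₀, mem_interior_iff_mem_nhds.2 ?_⟩
  have hlim : Tendsto (fun y => (y - c) / ε) (𝓝 (c + ε * τ₀)) (𝓝 τ₀) :=
    Continuous.tendsto' (by fun_prop) _ _ (by field_simp; ring)
  filter_upwards [hlim.eventually h] with y hy
  rwa [mul_div_cancel₀ _ hε, add_sub_cancel] at hy

end NonemptyInterior

namespace StablyIntersecting

variable {C C' : RegCantorSet} {i : Fin C.k} {i' : Fin C'.k} {h h' : ℝ → ℝ} {ι : Type*}
  {l : Filter ι} {u u' : ι → ℝ → ℝ}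

theorem eventually_nonempty (hst : StablyIntersecting C C' i i' h h')
    (hu : TendstoC1On u h l (C.I i)) (hu' : TendstoC1On u' h' l (C'.I i')) :
    ∀ᶠ j in l, (u j '' (C.K ∩ C.I i) ∩ u' j '' (C'.K ∩ C'.I i')).Nonempty := by
  obtain ⟨ε, hε, hst⟩ := hst
  filter_upwards [hu.eventually_contDiffOn, hu'.eventually_contDiffOn,
    hu.eventually_c1CloseOn hε, hu'.eventually_c1CloseOn hε] with j hj hj' hclose hclose'
  exact hst _ _ hj hj' hclose hclose'

end StablyIntersecting

namespace RegCantorSet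

namespace IsBlowUp

variable {C : RegCantorSet} {ι : Type*} {x : ℝ} {i : Fin C.k} {φ : ι → ℝ → ℝ} {ε : ι → ℝ}
  {k : ℝ → ℝ} {l : Filter ι}

theorem tendstoC1On_prodMk (h : C.IsBlowUp x i φ ε k l) (τ₀ : ℝ) :
    TendstoC1On (fun (p : ι × ℝ) s => ((φ p.1 s - x) / ε p.1, p.2)) (fun s => (k s, τ₀))
      (l ×ˢ 𝓝 τ₀) (C.I i) := by
  refine ((h.tendstoC1On.comp_tendsto tendsto_fst).clm_apply_add isCompact_Icc
    (uniqueDiffOn_Icc (C.hab i)) (tendsto_const_nhds (x := ContinuousLinearMap.inl ℝ ℝ ℝ))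
    (c := fun p : ι × ℝ => (0, p.2)) (tendsto_const_nhds.prodMk_nhds tendsto_snd)).congr
    (Eventually.of_forall fun p s _ => ?_) fun s _ => ?_ <;> simp

theorem eventually_prod_add_smul_eq (h : C.IsBlowUp x i φ ε k l) (c τ₀ : ℝ) :
    ∀ᶠ p : ι × ℝ in l ×ˢ 𝓝 τ₀, ∀ s,
      (x, c) + ε p.1 • ((φ p.1 s - x) / ε p.1, p.2) = (φ p.1 s, c + ε p.1 * p.2) := by
  filter_upwards [tendsto_fst.eventually h.scale_ne_zero] with p hp s
  simp [mul_div_cancel₀ _ hp]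

theorem tendstoC1On_slope_comp (h : C.IsBlowUp x i φ ε k l) {G : ℝ × ℝ → ℝ} {c : ℝ}
    (hG : ContDiffAt ℝ 1 G (x, c)) (τ₀ : ℝ) :
    TendstoC1On (fun (p : ι × ℝ) s => (G (φ p.1 s, c + ε p.1 * p.2) - G (x, c)) / ε p.1)
      (fun s => fderiv ℝ G (x, c) (1, 0) * k s + fderiv ℝ G (x, c) (0, 1) * τ₀)
      (l ×ˢ 𝓝 τ₀) (C.I i) := by
  refine ((h.tendstoC1On_prodMk τ₀).rescale isCompact_Icc (uniqueDiffOn_Icc (C.hab i)) hG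
    (h.tendsto_scale.comp tendsto_fst) (tendsto_fst.eventually h.scale_ne_zero)).congr ?_
    fun s _ => ?_
  · filter_upwards [h.eventually_prod_add_smul_eq c τ₀] with p hp s _
    simp only [Function.comp_apply, hp, smul_eq_mul, inv_mul_eq_div]
  · have hsplit : ((k s, τ₀) : ℝ × ℝ) = k s • (1, 0) + τ₀ • (0, 1) := by simp
    simp only [hsplit, map_add, map_smul, smul_eq_mul, mul_comm]

theorem eventually_forall_mem (h : C.IsBlowUp x i φ ε k l) {c τ₀ : ℝ} {B : Set (ℝ × ℝ)}
    (hB : B ∈ 𝓝 (x, c)) :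
    ∀ᶠ p : ι × ℝ in l ×ˢ 𝓝 τ₀, ∀ s ∈ C.I i, (φ p.1 s, c + ε p.1 * p.2) ∈ B := by
  have hunif := (h.tendstoC1On_prodMk τ₀).tendstoUniformlyOn_add_smul isCompact_Icc
    (h.tendsto_scale.comp tendsto_fst) (x, c)
  filter_upwards [h.eventually_prod_add_smul_eq c τ₀, eventually_prod_principal_iff.1
    ((tendsto_prod_principal_iff.2 hunif).eventually hB)] with p hp hmem s hs
  exact hp s ▸ hmem s hs

end IsBlowUp

end RegCantorSet

section Main

variable {C C' : RegCantorSet} {f : ℝ × ℝ → ℝ} {z : ℝ × ℝ}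

theorem eventually_add_mul_mem_image {ι : Type*} {l : Filter ι} {i : Fin C.k} {i' : Fin C'.k}
    {φ φ' : ι → ℝ → ℝ} {ε : ι → ℝ} {k k' : ℝ → ℝ} {G : ℝ × ℝ → ℝ} {τ₀ : ℝ} {W : Set (ℝ × ℝ)}
    (h : C.IsBlowUp z.1 i φ ε k l) (h' : C'.IsBlowUp z.2 i' φ' ε k' l)
    (hG : ContDiffAt ℝ 1 G (z.1, f z)) (hGz : G (z.1, f z) = z.2)
    (hfG : ∀ᶠ w in 𝓝 (z.1, f z), f (w.1, G w) = w.2) (hW : W ∈ 𝓝 z)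
    (hst : StablyIntersecting C C' i i' (fun s => fderiv ℝ G (z.1, f z) (1, 0) * k s +
      fderiv ℝ G (z.1, f z) (0, 1) * τ₀) k') :
    ∀ᶠ p : ι × ℝ in l ×ˢ 𝓝 τ₀, f z + ε p.1 * p.2 ∈ f '' (C.K ×ˢ C'.K ∩ W) := by
  have hgraph : ∀ᶠ w in 𝓝 (z.1, f z), (w.1, G w) ∈ W := by
    have hcont : ContinuousAt (fun w => (w.1, G w)) (z.1, f z) :=
      continuousAt_fst.prodMk hG.continuousAt
    exact hcont.preimage_mem_nhds (by rwa [hGz])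
  filter_upwards [hst.eventually_nonempty (h.tendstoC1On_slope_comp hG τ₀)
      (h'.tendstoC1On.comp_tendsto tendsto_fst), h.eventually_forall_mem (hfG.and hgraph),
    tendsto_fst.eventually h.scale_ne_zero, tendsto_fst.eventually h.mapsTo,
    tendsto_fst.eventually h'.mapsTo]
  rintro p ⟨_, ⟨s, hs, rfl⟩, s', hs', hmeet⟩ hmem hε hmaps hmaps'
  have hφ' : φ' p.1 s' = G (φ p.1 s, f z + ε p.1 * p.2) := by
    simpa only [hGz, div_left_inj' hε, sub_left_inj] using hmeet
  exact ⟨(φ p.1 s, φ' p.1 s'), ⟨⟨hmaps hs, hmaps' hs'⟩, hφ' ▸ (hmem s hs.2).2⟩,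
    hφ' ▸ (hmem s hs.2).1⟩

theorem image_of_product_has_nonempty_interior_general (hV : MemV C C') (hz : z ∈ C.K ×ˢ C'.K)
    (hf : ContDiffAt ℝ 1 f z) (hdx : fderiv ℝ f z (1, 0) ≠ 0) (hdy : fderiv ℝ f z (0, 1) ≠ 0)
    {W : Set (ℝ × ℝ)} (hW : W ∈ 𝓝 z) : (interior (f '' (C.K ×ˢ C'.K ∩ W))).Nonempty := by
  obtain ⟨G, hG, hGz, hfG, hα, hβ⟩ := exists_implicit_of_fderiv_ne_zero hf hdx hdy
  obtain ⟨θ, θ', hθ, hθ', 𝓤, ε, φ, φ', ρ, q, q', hρ, hblow, hblow'⟩ :=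
    RegCantorSet.exists_isBlowUp_pair hz.1 hz.2
  set α := fderiv ℝ G (z.1, f z) (1, 0)
  set β := fderiv ℝ G (z.1, f z) (0, 1)
  obtain ⟨t, hst⟩ := hV θ hθ θ' hθ' (α * ρ) (-(α * ρ * q)) 1 (-q') (mul_ne_zero hα hρ) one_ne_zero
  have hst' : StablyIntersecting C C' (θ 0) (θ' 0)
      (fun s => α * (ρ * (C.limGeom θ s - q)) + β * (t / β)) (fun s => C'.limGeom θ' s - q') := by
    convert hst using 2 with s s
    · field_simp
      ring
    · ring
  obtain ⟨n, hn, hεn⟩ := ((eventually_add_mul_mem_image hblow hblow' hG hGz hfG hW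
    hst').curry.and hblow.scale_ne_zero).exists
  exact interior_nonempty_of_eventually_add_mul_mem hεn hn

end Main

/-- Let `K`, `K'` be regular Cantor sets with expanding maps `g`, `g'`
such that `HD(K) + HD(K') > 1` and `(g,g') ∈ V`. If `f` is `C¹` on an open set
`U ⊇ K × K'` and at some point of `K × K'` both partial derivatives of `f` are nonzero
(the gradient is parallel to neither coordinate axis), then `f(K × K')` has nonempty
interior. -/
theorem image_of_product_has_nonempty_interior
    (C C' : RegCantorSet) (hdim : 1 < dimH C.K + dimH C'.K) (hV : MemV C C')
    (U : Set (ℝ × ℝ)) (hU : IsOpen U) (hKU : C.K ×ˢ C'.K ⊆ U)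
    (f : ℝ × ℝ → ℝ) (hf : ContDiffOn ℝ 1 f U)
    (z : ℝ × ℝ) (hz : z ∈ C.K ×ˢ C'.K)
    (hdx : fderiv ℝ f z (1, 0) ≠ 0) (hdy : fderiv ℝ f z (0, 1) ≠ 0) :
    (interior (f '' (C.K ×ˢ C'.K))).Nonempty :=
  (image_of_product_has_nonempty_interior_general hV hz (hf.contDiffAt (hU.mem_nhds (hKU hz)))
    hdx hdy univ_mem).mono (interior_mono (image_mono inter_subset_left))
end
end

section
/- Let K be a regular Cantor set defined by a C^{1+} expanding map ψ with Markov partition ℛ = {K_1,…,K_k}, so that K = ⋂_{n≥0} ψ⁻ⁿ(K_1 ∪ … ∪ K_k). For a finite admissible word b̲ = (b_1,…,b_m) let I_b̲ = I_{b_1} ∩ ψ⁻¹(I_{b_2}) ∩ … ∩ ψ^{-(m-1)}(I_{b_m}) be the corresponding cylinder interval, and let K_b̲ = ⋂_{n≥0} ψ⁻ⁿ((⋃_{i=1}^k K_i) \ I_b̲) be the Cantor set obtained by removing the cylinder I_b̲. Then for every ε > 0 there is m₀ such that for every admissible word b̲ of length m ≥ m₀ one has HD(K_b̲) ≥ HD(K)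 − ε; that is, the loss of Hausdorff dimension caused by removing a cylinder tends to 0 as the depth m of the cylinder tends to infinity. -/
noncomputable section
open Set Filter Topology MeasureTheory
open scoped ENNReal

/-- A regular Cantor set in the line, defined by a `C^{1+}` expanding map `ψ` with a
Markov partition by disjoint compact intervals `K_i = [a i, b i]`. -/
structure RegularCantorData where
  k : ℕ
  hk : 0 < k
  a : Fin k → ℝ
  b : Fin k → ℝ
  hab : ∀ i, a i < b i
  disj : ∀ i j, i ≠ j → Disjoint (Icc (a i) (b i)) (Icc (a j) (b j))
  ψ : ℝ → ℝ
  smooth : ContDiffOn ℝ 1 ψ (⋃ i, Icc (a i) (b i))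
  holder : ∃ C r : NNReal, 0 < r ∧
    HolderOnWith C r (fun x => derivWithin ψ (⋃ i, Icc (a i) (b i)) x)
      (⋃ i, Icc (a i) (b i))
  expanding : ∃ lam : ℝ, 1 < lam ∧
    ∀ x ∈ ⋃ i, Icc (a i) (b i), lam ≤ |derivWithin ψ (⋃ i, Icc (a i) (b i)) x|
  markov : ∀ i j, (ψ '' Icc (a i) (b i) ∩ Icc (a j) (b j)).Nonempty →
    Icc (a j) (b j) ⊆ ψ '' Icc (a i) (b i)

namespace RegularCantorData

variable (D : RegularCantorData)

/-- The union of the partition intervals. -/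
def domain : Set ℝ := ⋃ i, Icc (D.a i) (D.b i)

/-- The regular Cantor set `K = ⋂_{n≥0} ψ⁻ⁿ(K_1 ∪ … ∪ K_k)`. -/
def K : Set ℝ := {x | ∀ n : ℕ, D.ψ^[n] x ∈ D.domain}

/-- Admissibility of the finite word `w` of length `m`. -/
def Admissible (m : ℕ) (w : ℕ → Fin D.k) : Prop :=
  ∀ l : ℕ, l + 1 < m → Icc (D.a (w (l + 1))) (D.b (w (l + 1))) ⊆
    D.ψ '' Icc (D.a (w l)) (D.b (w l))

/-- The cylinder interval `I_b̲ = I_{b_1} ∩ ψ⁻¹(I_{b_2}) ∩ … ∩ ψ^{-(m-1)}(I_{b_m})`. -/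
def cyl (m : ℕ) (w : ℕ → Fin D.k) : Set ℝ :=
  ⋂ j ∈ Finset.range m, (D.ψ^[j]) ⁻¹' Icc (D.a (w j)) (D.b (w j))

/-- The Cantor set `K_b̲` obtained by removing the cylinder `I_b̲`. -/
def Kremoved (m : ℕ) (w : ℕ → Fin D.k) : Set ℝ :=
  {x | ∀ n : ℕ, D.ψ^[n] x ∈ D.domain \ D.cyl m w}

end RegularCantorData


/-!
Let `s < HD(K)`. Every point of `K` has an iterate that visits the interval of some letter `a`
infinitely often, so by a Borel–Cantelli argument there are a letter `a` and arbitrarily long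
lengths `n` for which the loops at `a` of length `n` have cylinders with `∑ |I_u|^s > C * (n + 1)`.
A word `b` with more than `2 * n` letters contains at most `n` loops starting at one of its letters
`1, …, n`, and deleting these loops leaves a family with `∑ |I_u|^s > C`. An orbit composed of the
remaining loops never follows `b`, since within `n` steps of entering the cylinder it would complete
a full block and run through a deleted loop. By bounded distortion the remaining inverse branches
form an iterated function system whose limit set lies in `K_b` and has dimension at least `s`.
-/
open scoped NNReal

section CoverSums

variable {X : Type*} [EMetricSpace X]

theorem exists_isOpen_superset_ediam_rpow_le {S : Set X} (hS : Metric.ediam S ≠ ⊤) {d : ℝ}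
    (hd : 0 ≤ d) {δ : ℝ≥0∞} (hδ : δ ≠ 0) :
    ∃ V, IsOpen V ∧ S ⊆ V ∧ Metric.ediam V ^ d ≤ Metric.ediam S ^ d + δ := by
  have hcont : Continuous fun η : ℝ≥0 => (Metric.ediam S + 2 * (η : ℝ≥0∞)) ^ d :=
    ENNReal.continuous_rpow_const.comp <| continuous_const.add <|
      (ENNReal.continuous_const_mul ENNReal.ofNat_ne_top).comp ENNReal.continuous_coe
  have hlt : (Metric.ediam S + 2 * ((0 : ℝ≥0) : ℝ≥0∞)) ^ d < Metric.ediam S ^ d + δ := by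
    simpa only [ENNReal.coe_zero, mul_zero, add_zero] using
      ENNReal.lt_add_right (ENNReal.rpow_ne_top_of_nonneg hd hS) hδ
  have hev : ∀ᶠ η : ℝ≥0 in 𝓝[>] 0,
      (Metric.ediam S + 2 * (η : ℝ≥0∞)) ^ d < Metric.ediam S ^ d + δ :=
    nhdsWithin_le_nhds ((hcont.tendsto 0).eventually (gt_mem_nhds hlt))
  obtain ⟨η, hη, hη0⟩ := (hev.and self_mem_nhdsWithin).exists
  exact ⟨Metric.thickening η S, Metric.isOpen_thickening,
    Metric.self_subset_thickening (NNReal.coe_pos.2 hη0) S,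
    (ENNReal.rpow_le_rpow (Metric.ediam_thickening_le η) hd).trans hη.le⟩

variable [MeasurableSpace X] [BorelSpace X]

theorem exists_cover_tsum_ediam_rpow_lt {S : Set X} {d : ℝ} (hd : 0 < d) {e : ℝ≥0∞}
    (he : μH[d] S < e) :
    ∃ t : ℕ → Set X, S ⊆ ⋃ n, t n ∧ (∀ n, Metric.ediam (t n) ≤ 1) ∧
      ∑' n, Metric.ediam (t n) ^ d < e := by
  have hnonempty (t : Set X) : ⨆ _ : t.Nonempty, Metric.ediam t ^ d = Metric.ediam t ^ d := by
    rcases t.eq_empty_or_nonempty with rfl | ht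
    · simp [hd]
    · exact ciSup_pos ht
  rw [Measure.hausdorffMeasure_apply] at he
  have hcover := (le_iSup₂ (f := fun (ρ : ℝ≥0∞) (_ : 0 < ρ) => ⨅ (t : ℕ → Set X)
    (_ : S ⊆ ⋃ n, t n) (_ : ∀ n, Metric.ediam (t n) ≤ ρ),
      ∑' n, ⨆ _ : (t n).Nonempty, Metric.ediam (t n) ^ d) 1 one_pos).trans_lt he
  simp only [iInf_lt_iff, hnonempty] at hcover
  obtain ⟨t, hSt, ht, hsum⟩ := hcover
  exact ⟨t, hSt, ht, hsum⟩

theorem le_hausdorffMeasure_of_forall_finite_cover {S : Set X} (hS : IsCompact S) {d : ℝ}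
    (hd : 0 < d) {e : ℝ≥0∞}
    (h : ∀ (T : Finset ℕ) (U : ℕ → Set X), S ⊆ ⋃ i ∈ T, U i →
      e ≤ ∑ i ∈ T, Metric.ediam (U i) ^ d) : e ≤ μH[d] S := by
  refine ENNReal.le_of_forall_pos_le_add fun η hη hfin => ?_
  have hη0 : (η : ℝ≥0∞) / 2 ≠ 0 := by simpa using hη.ne'
  obtain ⟨t, hSt, ht, hsum⟩ :=
    exists_cover_tsum_ediam_rpow_lt hd (ENNReal.lt_add_right hfin.ne hη0)
  obtain ⟨δ, hδ, hδsum⟩ := ENNReal.exists_pos_sum_of_countable hη0 ℕ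
  choose V hVopen htV hV using fun n => exists_isOpen_superset_ediam_rpow_le
    ((ht n).trans_lt ENNReal.one_lt_top).ne hd.le (ENNReal.coe_ne_zero.2 (hδ n).ne')
  obtain ⟨T, hT⟩ := hS.elim_finite_subcover V hVopen (hSt.trans (iUnion_mono htV))
  calc e ≤ ∑ i ∈ T, Metric.ediam (V i) ^ d := h T V hT
    _ ≤ ∑' i, Metric.ediam (V i) ^ d := ENNReal.sum_le_tsum T
    _ ≤ ∑' i, (Metric.ediam (t i) ^ d + δ i) := ENNReal.tsum_le_tsum hV
    _ = ∑' i, Metric.ediam (t i) ^ d + ∑' i, (δ i : ℝ≥0∞) := ENNReal.tsum_add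
    _ ≤ μH[d] S + η / 2 + η / 2 := add_le_add hsum.le hδsum.le
    _ = μH[d] S + η := by rw [add_assoc, ENNReal.add_halves]

theorem hausdorffMeasure_setOf_frequently_mem_eq_zero {ι : ℕ → Type*} [∀ n, Countable (ι n)]
    {t : ∀ n, ι n → Set X} {d : ℝ} (hd : 0 < d)
    (h : ∑' n, ∑' i, Metric.ediam (t n i) ^ d ≠ ⊤) :
    μH[d] {x | ∃ᶠ n in atTop, ∃ i, x ∈ t n i} = 0 := by
  set tail : ℕ → ℝ≥0∞ := fun N => ∑' n, ∑' i, Metric.ediam (t (n + N) i) ^ d with htail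
  have htail0 : Tendsto tail atTop (𝓝 0) := ENNReal.tendsto_sum_nat_add _ h
  have hmesh : Tendsto (fun N => tail N ^ d⁻¹) atTop (𝓝 0) := by
    simpa only [Function.comp_def, ENNReal.zero_rpow_of_pos (inv_pos.2 hd)] using
      ((ENNReal.continuous_rpow_const (y := d⁻¹)).tendsto 0).comp htail0
  have hle := Measure.hausdorffMeasure_le_liminf_tsum d
    {x | ∃ᶠ n in atTop, ∃ i, x ∈ t n i} (ι := fun N => Σ n, ι (n + N)) _ hmesh
    (fun N p => t (p.1 + N) p.2)
    (.of_forall fun N p => by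
      rw [ENNReal.le_rpow_inv_iff hd]
      exact (ENNReal.le_tsum p.2).trans
        (ENNReal.le_tsum (f := fun n => ∑' i, Metric.ediam (t (n + N) i) ^ d) p.1))
    (.of_forall fun N x hx => by
      obtain ⟨n, hn, i, hi⟩ := frequently_atTop.1 hx N
      obtain ⟨n, rfl⟩ := Nat.exists_eq_add_of_le' hn
      exact mem_iUnion.2 ⟨⟨n, i⟩, hi⟩)
  simp only [ENNReal.tsum_sigma', ← htail] at hle
  exact le_antisymm (hle.trans_eq htail0.liminf_eq) zero_le

end CoverSums

theorem tsum_natCast_add_one_mul_pow_ne_top {p : ℝ≥0∞} (hp : p < 1) :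
    ∑' n : ℕ, ((n : ℝ≥0∞) + 1) * p ^ n ≠ ⊤ := by
  lift p to ℝ≥0 using (hp.trans ENNReal.one_lt_top).ne
  have hp' : ‖(p : ℝ)‖ < 1 := by simpa using hp
  have hsum : Summable fun n : ℕ => ((n : ℝ) + 1) * (p : ℝ) ^ n := by
    simpa only [add_mul, one_mul, pow_one] using
      (summable_pow_mul_geometric_of_norm_lt_one 1 hp').add
        (summable_geometric_of_norm_lt_one hp')
  have hsum' : Summable fun n : ℕ => ((n : ℝ≥0) + 1) * p ^ n := by
    rw [← NNReal.summable_coe]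
    exact_mod_cast hsum
  exact_mod_cast ENNReal.tsum_coe_ne_top_iff_summable.2 hsum'

theorem sum_rpow_add_le {ι : Type*} (F : Finset ι) {x : ι → ℝ≥0∞} {ρ : ℝ≥0∞}
    (hx : ∀ i ∈ F, x i ≤ ρ) {s t : ℝ} (hs : 0 ≤ s) (ht : 0 ≤ t) :
    ∑ i ∈ F, x i ^ (s + t) ≤ ρ ^ t * ∑ i ∈ F, x i ^ s := by
  rw [Finset.mul_sum]
  refine Finset.sum_le_sum fun i hi => ?_
  rw [ENNReal.rpow_add_of_nonneg s t hs ht, mul_comm]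
  gcongr
  exact hx i hi

theorem frequently_lt_sum_ediam_rpow_of_lt_dimH {X : Type*} [EMetricSpace X] {ι : ℕ → Type*}
    [∀ n, Fintype (ι n)] {t : ∀ n, ι n → Set X} {A q C : ℝ≥0∞} (hA : A ≠ ⊤) (hq : q < 1)
    (hdiam : ∀ n i, Metric.ediam (t n i) ≤ A * q ^ n) {s : ℝ≥0}
    (hs : s < dimH {x | ∃ᶠ n in atTop, ∃ i, x ∈ t n i}) (hC : C ≠ ⊤) :
    ∃ᶠ n : ℕ in atTop, C * (n + 1) < ∑ i, Metric.ediam (t n i) ^ (s : ℝ) := by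
  borelize X
  by_contra hfreq
  simp only [not_frequently, not_lt, eventually_atTop] at hfreq
  obtain ⟨N, hN⟩ := hfreq
  obtain ⟨s₁, hs₁, hs₁dim⟩ := ENNReal.lt_iff_exists_nnreal_btwn.1 hs
  have hgap : 0 < (s₁ : ℝ) - s := sub_pos.2 (mod_cast hs₁)
  have hs₁pos : 0 < (s₁ : ℝ) := by linarith [s.coe_nonneg]
  set p : ℝ≥0∞ := q ^ ((s₁ : ℝ) - s)
  set a : ℕ → ℝ≥0∞ := fun n => A ^ ((s₁ : ℝ) - s) * C * ((n + 1) * p ^ n)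
  have hterm (n : ℕ) : ∑' i, Metric.ediam (t (n + N) i) ^ (s₁ : ℝ) ≤ a (n + N) := by
    rw [tsum_fintype]
    calc ∑ i, Metric.ediam (t (n + N) i) ^ (s₁ : ℝ)
        = ∑ i, Metric.ediam (t (n + N) i) ^ ((s : ℝ) + (s₁ - s)) := by
          rw [add_sub_cancel]
      _ ≤ (A * q ^ (n + N)) ^ ((s₁ : ℝ) - s) * ∑ i, Metric.ediam (t (n + N) i) ^ (s : ℝ) :=
        sum_rpow_add_le _ (fun i _ => hdiam _ i) s.coe_nonneg hgap.le
      _ ≤ (A * q ^ (n + N)) ^ ((s₁ : ℝ) - s) * (C * ((n + N : ℕ) + 1)) := by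
        gcongr
        exact hN _ (Nat.le_add_left N n)
      _ = a (n + N) := by
        rw [ENNReal.mul_rpow_of_nonneg _ _ hgap.le, ← ENNReal.rpow_natCast_mul,
          mul_comm ((n + N : ℕ) : ℝ), ENNReal.rpow_mul_natCast]
        ring
  have ha : ∑' n, a n ≠ ⊤ := by
    rw [ENNReal.tsum_mul_left]
    exact ENNReal.mul_ne_top (ENNReal.mul_ne_top (ENNReal.rpow_ne_top_of_nonneg hgap.le hA) hC)
      (tsum_natCast_add_one_mul_pow_ne_top (ENNReal.rpow_lt_one hq hgap))
  have hzero : μH[s₁] {x | ∃ᶠ n in atTop, ∃ i, x ∈ t (n + N) i} = 0 :=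
    hausdorffMeasure_setOf_frequently_mem_eq_zero hs₁pos <| ne_top_of_le_ne_top ha <|
      (ENNReal.tsum_le_tsum hterm).trans
        (ENNReal.tsum_comp_le_tsum_of_injective (add_left_injective N) a)
  have hshift (x : X) : (∃ᶠ n in atTop, ∃ i, x ∈ t (n + N) i) ↔ ∃ᶠ n in atTop, ∃ i, x ∈ t n i := by
    conv_rhs => rw [← map_add_atTop_eq_nat N, frequently_map]
  simp only [hshift, hausdorffMeasure_of_lt_dimH hs₁dim, ENNReal.top_ne_zero] at hzero

theorem dimH_le_dimH_of_edist_le_edist {X Y : Type*} [EMetricSpace X] [EMetricSpace Y] {f : X → Y}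
    {S : Set X} {T : Set Y} (hST : MapsTo f S T)
    (h : ∀ x ∈ S, ∀ y ∈ S, edist x y ≤ edist (f x) (f y)) : dimH S ≤ dimH T := by
  have hanti : AntilipschitzWith 1 (S.domRestrict f) := fun x y => by
    rw [ENNReal.coe_one, one_mul]
    exact h x x.2 y y.2
  calc dimH S = dimH (univ : Set S) := by
        rw [← (isometry_subtype_coe (s := S)).dimH_image, Subtype.coe_image_univ]
    _ ≤ dimH (S.domRestrict f '' univ) := hanti.le_dimH_image univ
    _ ≤ dimH T := dimH_mono (image_subset_iff.2 fun x _ => hST x.2)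

section MaximalInvariantSet

variable {X : Type*}

/-- The points whose first `n + 1` iterates under `f`, starting with the point itself, lie in
`P`. -/
def survivors (f : X → X) (P : Set X) (n : ℕ) : Set X :=
  {x | ∀ j ≤ n, f^[j] x ∈ P}

/-- The points whose whole forward orbit under `f` lies in `P`. -/
def maximalInvariantSet (f : X → X) (P : Set X) : Set X :=
  {x | ∀ j, f^[j] x ∈ P}

variable {f : X → X} {P : Set X}

theorem survivors_zero : survivors f P 0 = P := by
  ext x
  simp [survivors]

theorem survivors_succ (n : ℕ) : survivors f P (n + 1) = P ∩ f ⁻¹' survivors f P n := by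
  ext x
  simpa only [survivors, mem_inter_iff, mem_preimage, mem_ofPred_eq, Order.lt_add_one_iff,
    Function.iterate_succ_apply, Function.iterate_zero_apply] using
    Nat.forall_lt_succ_left' (n := n + 1) (p := fun j _ => f^[j] x ∈ P)

theorem mem_maximalInvariantSet_iff {x : X} :
    x ∈ maximalInvariantSet f P ↔ x ∈ P ∧ f x ∈ maximalInvariantSet f P :=
  Nat.and_forall_add_one.symm

theorem iInter_survivors : ⋂ n, survivors f P n = maximalInvariantSet f P := by
  ext x
  simp only [survivors, maximalInvariantSet, mem_iInter, mem_ofPred_eq]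
  exact ⟨fun h j => h j j le_rfl, fun h _ j _ => h j⟩

theorem survivors_nonempty (hP : P.Nonempty) (hf : P ⊆ f '' P) (n : ℕ) :
    (survivors f P n).Nonempty := by
  induction n with
  | zero => rwa [survivors_zero]
  | succ n ih =>
    obtain ⟨y, hy⟩ := ih
    obtain ⟨x, hx, rfl⟩ := hf (hy 0 n.zero_le)
    rw [survivors_succ]
    exact ⟨x, hx, hy⟩

variable [TopologicalSpace X]

theorem isClosed_survivors (hP : IsClosed P) (hf : ContinuousOn f P) (n : ℕ) :
    IsClosed (survivors f P n) := by
  induction n with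
  | zero => rwa [survivors_zero]
  | succ n ih =>
    rw [survivors_succ]
    exact hf.preimage_isClosed_of_isClosed hP ih

theorem isCompact_maximalInvariantSet (hP : IsCompact P) (hPc : IsClosed P)
    (hf : ContinuousOn f P) : IsCompact (maximalInvariantSet f P) :=
  hP.of_isClosed_subset
    (iInter_survivors ▸ isClosed_iInter (isClosed_survivors hPc hf)) fun _ hx => hx 0

theorem maximalInvariantSet_nonempty (hP : IsCompact P) (hPc : IsClosed P)
    (hf : ContinuousOn f P) (hne : P.Nonempty) (hsurj : P ⊆ f '' P) :
    (maximalInvariantSet f P).Nonempty := by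
  rw [← iInter_survivors]
  exact IsCompact.nonempty_iInter_of_sequence_nonempty_isCompact_isClosed _
    (fun n x hx j hj => hx j (hj.trans n.le_succ)) (survivors_nonempty hne hsurj)
    (survivors_zero.symm ▸ hP) (isClosed_survivors hPc hf)

end MaximalInvariantSet

section ExpandingPieces

variable {X ι : Type*} {c : ι → Set X} {f : X → X} {Λ : Set X}

theorem exists_pos_forall_le_edist [Finite ι] [EMetricSpace X] (hc : ∀ u, IsCompact (c u))
    (hdisj : Pairwise (Function.onFun Disjoint c)) :
    ∃ δ : ℝ≥0∞, 0 < δ ∧ ∀ u v, u ≠ v → ∀ x ∈ c u, ∀ y ∈ c v, δ ≤ edist x y := by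
  have hev : ∀ᶠ δ : ℝ≥0 in 𝓝[>] 0, ∀ u v, u ≠ v → ∀ x ∈ c u, ∀ y ∈ c v,
      (δ : ℝ≥0∞) ≤ edist x y := by
    refine eventually_all.2 fun u => eventually_all.2 fun v => ?_
    rcases eq_or_ne u v with huv | huv
    · exact .of_forall fun _ hne => absurd huv hne
    obtain ⟨r, hr, hsep⟩ :=
      Metric.exists_pos_forall_lt_edist (hc u) (hc v).isClosed (hdisj huv)
    filter_upwards [nhdsWithin_le_nhds (gt_mem_nhds hr)] with δ hδ _ x hx y hy
    exact (ENNReal.coe_le_coe.2 hδ.le).trans (hsep x hx y hy).le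
  obtain ⟨δ, hsep, hδ⟩ := (hev.and self_mem_nhdsWithin).exists
  exact ⟨δ, ENNReal.coe_pos.2 hδ, hsep⟩

theorem mul_ediam_image_le [PseudoEMetricSpace X] {r : ℝ≥0∞} {S : Set X}
    (h : ∀ x ∈ S, ∀ y ∈ S, r * edist (f x) (f y) ≤ edist x y) :
    r * Metric.ediam (f '' S) ≤ Metric.ediam S := by
  simp only [Metric.ediam, iSup_image, ENNReal.mul_iSup]
  exact iSup₂_le fun x hx => iSup₂_le fun y hy =>
    (h x hx y hy).trans (Metric.edist_le_ediam_of_mem hx hy)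

theorem mul_sum_ediam_image_rpow_le [PseudoEMetricSpace X] {κ : Type*} {r : ℝ≥0∞} {S : Set X}
    (h : ∀ x ∈ S, ∀ y ∈ S, r * edist (f x) (f y) ≤ edist x y) {s : ℝ} (hs : 0 ≤ s)
    (T : Finset κ) (U : κ → Set X) :
    r ^ s * ∑ i ∈ T, Metric.ediam (f '' (U i ∩ S)) ^ s ≤ ∑ i ∈ T, Metric.ediam (U i) ^ s := by
  rw [Finset.mul_sum]
  refine Finset.sum_le_sum fun i _ => ?_
  rw [← ENNReal.mul_rpow_of_nonneg _ _ hs]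
  gcongr
  exact (mul_ediam_image_le fun x hx y hy => h x hx.2 y hy.2).trans
    (Metric.ediam_mono inter_subset_left)

open Classical in
theorem subset_biUnion_image_inter {κ : Type*} {S : Set X} (hsurj : Λ ⊆ f '' (Λ ∩ S))
    {T : Finset κ} {U : κ → Set X} (hU : Λ ⊆ ⋃ i ∈ T, U i) :
    Λ ⊆ ⋃ i ∈ T.filter fun i => (U i ∩ S).Nonempty, f '' (U i ∩ S) := by
  intro y hy
  obtain ⟨x, ⟨hxΛ, hxS⟩, rfl⟩ := hsurj hy
  obtain ⟨i, hi, hxi⟩ := mem_iUnion₂.1 (hU hxΛ)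
  exact mem_iUnion₂.2 ⟨i, Finset.mem_filter.2 ⟨hi, x, hxi, hxS⟩, x, ⟨hxi, hxS⟩, rfl⟩

/-- If two of the pieces `c u` meet a member of the cover, its diameter is at least the gap `δ`.
Otherwise every `c u` is reached by a strictly smaller subfamily, which `f` expands to a cover
of `Λ`. -/
theorem rpow_le_sum_ediam_rpow_of_subset_biUnion [PseudoEMetricSpace X] [Fintype ι] [Nontrivial ι]
    {κ : Type*} {δ : ℝ≥0∞} {r : ι → ℝ≥0∞} {s : ℝ} (hs : 0 ≤ s) (hΛ : Λ.Nonempty)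
    (hsep : ∀ u v, u ≠ v → ∀ x ∈ c u, ∀ y ∈ c v, δ ≤ edist x y)
    (hsurj : ∀ u, Λ ⊆ f '' (Λ ∩ c u))
    (hexp : ∀ u, ∀ x ∈ c u, ∀ y ∈ c u, r u * edist (f x) (f y) ≤ edist x y)
    (hsum : 1 ≤ ∑ u, r u ^ s) (T : Finset κ) (U : κ → Set X) (hU : Λ ⊆ ⋃ i ∈ T, U i) :
    δ ^ s ≤ ∑ i ∈ T, Metric.ediam (U i) ^ s := by
  classical
  induction T using Finset.strongInduction generalizing U with
  | H T ih =>
    by_cases htwo : ∃ i ∈ T, ∃ u v, u ≠ v ∧ (U i ∩ c u).Nonempty ∧ (U i ∩ c v).Nonempty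
    · obtain ⟨i, hi, u, v, huv, ⟨x, hxU, hx⟩, y, hyU, hy⟩ := htwo
      calc δ ^ s ≤ Metric.ediam (U i) ^ s := by
            gcongr
            exact (hsep u v huv x hx y hy).trans (Metric.edist_le_ediam_of_mem hxU hyU)
        _ ≤ ∑ i ∈ T, Metric.ediam (U i) ^ s :=
          Finset.single_le_sum (f := fun i => Metric.ediam (U i) ^ s) (fun _ _ => zero_le) hi
    push Not at htwo
    set R : ι → Finset κ := fun u => T.filter fun i => (U i ∩ c u).Nonempty
    have hRdisj (u v : ι) (huv : u ≠ v) : Disjoint (R u) (R v) :=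
      Finset.disjoint_filter.2 fun i hi hu hv => hv.ne_empty (htwo i hi u v huv hu)
    have hcover (u : ι) : Λ ⊆ ⋃ i ∈ R u, f '' (U i ∩ c u) :=
      subset_biUnion_image_inter (hsurj u) hU
    have hRne (u : ι) : (R u).Nonempty := by
      obtain ⟨y, hy⟩ := hΛ
      obtain ⟨i, hi, -⟩ := mem_iUnion₂.1 (hcover u hy)
      exact ⟨i, hi⟩
    have hRlt (u : ι) : R u ⊂ T := by
      obtain ⟨v, hv⟩ := exists_ne u
      obtain ⟨i, hi⟩ := hRne v
      exact Finset.ssubset_iff_subset_ne.2 ⟨Finset.filter_subset _ _, fun h =>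
        Finset.disjoint_left.1 (hRdisj v u hv) hi (h ▸ Finset.filter_subset _ _ hi)⟩
    have hpiece (u : ι) : r u ^ s * δ ^ s ≤ ∑ i ∈ R u, Metric.ediam (U i) ^ s :=
      (mul_le_mul_right (ih (R u) (hRlt u) _ (hcover u)) _).trans
        (mul_sum_ediam_image_rpow_le (hexp u) hs _ _)
    calc δ ^ s
        ≤ (∑ u, r u ^ s) * δ ^ s := le_mul_of_one_le_left zero_le hsum
      _ = ∑ u, r u ^ s * δ ^ s := Finset.sum_mul ..
      _ ≤ ∑ u, ∑ i ∈ R u, Metric.ediam (U i) ^ s := Finset.sum_le_sum fun u _ => hpiece u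
      _ = ∑ i ∈ Finset.univ.biUnion R, Metric.ediam (U i) ^ s :=
        (Finset.sum_biUnion fun u _ v _ => hRdisj u v).symm
      _ ≤ ∑ i ∈ T, Metric.ediam (U i) ^ s :=
        Finset.sum_le_sum_of_subset
          (Finset.biUnion_subset.2 fun u _ => Finset.filter_subset _ _)

theorem le_dimH_maximalInvariantSet [EMetricSpace X] [Fintype ι] [Nontrivial ι] {J : Set X}
    {r : ι → ℝ≥0∞} {s : ℝ≥0} (hJ : J.Nonempty) (hc : ∀ u, IsCompact (c u))
    (hf : ∀ u, ContinuousOn f (c u)) (hdisj : Pairwise (Function.onFun Disjoint c))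
    (hsub : ∀ u, c u ⊆ J) (hsurj : ∀ u, J ⊆ f '' c u)
    (hexp : ∀ u, ∀ x ∈ c u, ∀ y ∈ c u, r u * edist (f x) (f y) ≤ edist x y)
    (hsum : 1 ≤ ∑ u, r u ^ (s : ℝ)) : s ≤ dimH (maximalInvariantSet f (⋃ u, c u)) := by
  rcases eq_zero_or_pos s with rfl | hs
  · exact zero_le
  borelize X
  set P := ⋃ u, c u
  set Λ := maximalInvariantSet f P
  have hP : IsCompact P := isCompact_iUnion hc
  have hfP : ContinuousOn f P :=
    (locallyFinite_of_finite c).continuousOn_iUnion (fun u => (hc u).isClosed) hf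
  have hPJ : P ⊆ J := iUnion_subset hsub
  obtain ⟨u₀⟩ : Nonempty ι := inferInstance
  have hne : P.Nonempty := (hJ.mono (hsurj u₀)).of_image.mono (subset_iUnion c u₀)
  have hPsurj : P ⊆ f '' P :=
    hPJ.trans ((hsurj u₀).trans (image_mono (subset_iUnion c u₀)))
  have hΛ : Λ.Nonempty := maximalInvariantSet_nonempty hP hP.isClosed hfP hne hPsurj
  have hΛsurj (u : ι) : Λ ⊆ f '' (Λ ∩ c u) := by
    intro y hy
    obtain ⟨x, hx, rfl⟩ := hsurj u (hPJ (hy 0))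
    exact ⟨x, ⟨mem_maximalInvariantSet_iff.2 ⟨mem_iUnion_of_mem u hx, hy⟩, hx⟩, rfl⟩
  obtain ⟨δ, hδ, hsep⟩ := exists_pos_forall_le_edist hc hdisj
  have hδle : δ ^ (s : ℝ) ≤ μH[s] Λ :=
    le_hausdorffMeasure_of_forall_finite_cover
      (isCompact_maximalInvariantSet hP hP.isClosed hfP) (NNReal.coe_pos.2 hs)
      (rpow_le_sum_ediam_rpow_of_subset_biUnion s.coe_nonneg hΛ hsep hΛsurj hexp hsum)
  exact le_dimH_of_hausdorffMeasure_ne_zero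
    ((ENNReal.rpow_pos_of_nonneg hδ s.coe_nonneg).trans_le hδle).ne'

end ExpandingPieces

section Distortion

variable {X Y : Type*} [PseudoMetricSpace X] [PseudoMetricSpace Y]

/-- The distortion of `f` on `s` is at most `B`: the expansion ratios
`dist (f x) (f y) / dist x y` over pairs of points of `s` differ by a factor of at most `B`.
The ratios are cross-multiplied, so that no two points need to be distinct. -/
def DistortionOnWith (B : ℝ) (f : X → Y) (s : Set X) : Prop :=
  ∀ x ∈ s, ∀ y ∈ s, ∀ z ∈ s, ∀ t ∈ s,
    dist (f x) (f y) * dist z t ≤ B * (dist (f z) (f t) * dist x y)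

namespace DistortionOnWith

variable {B B' : ℝ} {f : X → Y} {s : Set X}

protected theorem id : DistortionOnWith 1 (id : X → X) s := fun x _ y _ z _ t _ => by
  rw [one_mul, mul_comm]
  rfl

theorem mono_const (hf : DistortionOnWith B f s) (hB : B ≤ B') : DistortionOnWith B' f s :=
  fun x hx y hy z hz t ht => (hf x hx y hy z hz t ht).trans (by gcongr)

theorem ediam_mul_edist_le (hf : DistortionOnWith B f s) {x y : X} (hx : x ∈ s) (hy : y ∈ s) :
    Metric.ediam s * edist (f x) (f y) ≤
      ENNReal.ofReal B * Metric.ediam (f '' s) * edist x y := by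
  simp only [Metric.ediam, ENNReal.iSup_mul]
  refine iSup₂_le fun z hz => iSup₂_le fun t ht => ?_
  calc edist z t * edist (f x) (f y)
      = ENNReal.ofReal (dist (f x) (f y) * dist z t) := by
        rw [ENNReal.ofReal_mul dist_nonneg, ← edist_dist, ← edist_dist, mul_comm]
    _ ≤ ENNReal.ofReal (B * (dist (f z) (f t) * dist x y)) :=
        ENNReal.ofReal_le_ofReal (hf x hx y hy z hz t ht)
    _ = ENNReal.ofReal B * edist (f z) (f t) * edist x y := by
        rw [ENNReal.ofReal_mul' (by positivity), ENNReal.ofReal_mul dist_nonneg, ← edist_dist,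
          ← edist_dist, mul_assoc]
    _ ≤ ENNReal.ofReal B * Metric.ediam (f '' s) * edist x y := by
        gcongr
        exact Metric.edist_le_ediam_of_mem (mem_image_of_mem f hz) (mem_image_of_mem f ht)

theorem comp {Y Z : Type*} [MetricSpace Y] [PseudoMetricSpace Z] {f : X → Y} {g : Y → Z}
    {t : Set Y} (hg : DistortionOnWith B' g t) (hf : DistortionOnWith B f s)
    (hst : MapsTo f s t) (hinj : InjOn f s) : DistortionOnWith (B' * B) (g ∘ f) s := by
  intro x hx y hy z hz t ht
  rcases eq_or_ne x y with rfl | hxy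
  · simp
  rcases eq_or_ne z t with rfl | hzt
  · simp
  have hfx : 0 < dist (f x) (f y) := dist_pos.2 (hinj.ne hx hy hxy)
  have hfz : 0 < dist (f z) (f t) := dist_pos.2 (hinj.ne hz ht hzt)
  have hgfxy := hg _ (hst hx) _ (hst hy) _ (hst hz) _ (hst ht)
  have hfxy := hf x hx y hy z hz t ht
  refine le_of_mul_le_mul_right ?_ (mul_pos hfz hfx)
  calc dist (g (f x)) (g (f y)) * dist z t * (dist (f z) (f t) * dist (f x) (f y))
      = dist (g (f x)) (g (f y)) * dist (f z) (f t) * (dist (f x) (f y) * dist z t) := by ring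
    _ ≤ B' * (dist (g (f z)) (g (f t)) * dist (f x) (f y)) *
          (B * (dist (f z) (f t) * dist x y)) :=
        mul_le_mul hgfxy hfxy (by positivity) (le_trans (by positivity) hgfxy)
    _ = B' * B * (dist (g (f z)) (g (f t)) * dist x y) *
          (dist (f z) (f t) * dist (f x) (f y)) := by ring

end DistortionOnWith

end Distortion

section Derivative

variable {f : ℝ → ℝ} {S : Set ℝ}

theorem exists_dist_eq_abs_derivWithin_mul (hf : DifferentiableOn ℝ f S) {x y : ℝ}
    (hS : uIcc x y ⊆ S) :
    ∃ ξ ∈ uIcc x y, dist (f x) (f y) = |derivWithin f S ξ| * dist x y := by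
  wlog hxy : x ≤ y generalizing x y
  · simpa only [uIcc_comm, dist_comm] using this (uIcc_comm x y ▸ hS) (le_of_not_ge hxy)
  rcases hxy.eq_or_lt with rfl | hlt
  · exact ⟨x, left_mem_uIcc, by simp⟩
  rw [uIcc_of_le hxy] at hS ⊢
  have hnhds : ∀ ξ ∈ Ioo x y, S ∈ 𝓝 ξ := fun ξ hξ =>
    mem_of_superset (Icc_mem_nhds hξ.1 hξ.2) hS
  obtain ⟨ξ, hξ, hslope⟩ := exists_deriv_eq_slope f hlt (hf.continuousOn.mono hS)
    (hf.mono (Ioo_subset_Icc_self.trans hS))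
  refine ⟨ξ, Ioo_subset_Icc_self hξ, ?_⟩
  rw [derivWithin_of_mem_nhds (hnhds ξ hξ), hslope, abs_div, dist_comm, dist_comm x,
    Real.dist_eq, Real.dist_eq, div_mul_cancel₀]
  exact abs_ne_zero.2 (sub_ne_zero.2 hlt.ne')

theorem mul_dist_le_dist_of_le_abs_derivWithin (hf : DifferentiableOn ℝ f S) {c : ℝ}
    (hc : ∀ ξ ∈ S, c ≤ |derivWithin f S ξ|) {x y : ℝ} (hS : uIcc x y ⊆ S) :
    c * dist x y ≤ dist (f x) (f y) := by
  obtain ⟨ξ, hξ, heq⟩ := exists_dist_eq_abs_derivWithin_mul hf hS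
  rw [heq]
  gcongr
  exact hc ξ (hS hξ)

theorem distortionOnWith_of_holderOnWith_derivWithin (hf : DifferentiableOn ℝ f S) {C r : ℝ≥0}
    (hH : HolderOnWith C r (derivWithin f S) S) {c : ℝ} (hc0 : 0 < c)
    (hc : ∀ ξ ∈ S, c ≤ |derivWithin f S ξ|) {t : Set ℝ} (ht : Bornology.IsBounded t)
    (htS : convexHull ℝ t ⊆ S) :
    DistortionOnWith (1 + C / c * Metric.diam t ^ (r : ℝ)) f t := by
  intro x hx y hy z hz w hw
  have hull {x y : ℝ} (hx : x ∈ t) (hy : y ∈ t) : uIcc x y ⊆ convexHull ℝ t :=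
    segment_eq_uIcc x y ▸ segment_subset_convexHull hx hy
  obtain ⟨ξ, hξ, hfxy⟩ := exists_dist_eq_abs_derivWithin_mul hf ((hull hx hy).trans htS)
  obtain ⟨ζ, hζ, hfzw⟩ := exists_dist_eq_abs_derivWithin_mul hf ((hull hz hw).trans htS)
  set p := derivWithin f S ξ
  set q := derivWithin f S ζ
  have hdist : dist ξ ζ ≤ Metric.diam t := by
    rw [← convexHull_diam]
    exact Metric.dist_le_diam_of_mem (isBounded_convexHull.2 ht) (hull hx hy hξ) (hull hz hw hζ)
  have hq : c ≤ |q| := hc ζ (htS (hull hz hw hζ))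
  have hpq : |p| ≤ (1 + C / c * Metric.diam t ^ (r : ℝ)) * |q| :=
    calc |p| ≤ |q| + dist p q := by
          rw [Real.dist_eq, add_comm]
          simpa using abs_add_le (p - q) q
      _ ≤ |q| + C * Metric.diam t ^ (r : ℝ) := by
          gcongr
          exact hH.dist_le_of_le (htS (hull hx hy hξ)) (htS (hull hz hw hζ)) hdist
      _ = |q| + C / c * Metric.diam t ^ (r : ℝ) * c := by field_simp
      _ ≤ |q| + C / c * Metric.diam t ^ (r : ℝ) * |q| := by gcongr
      _ = (1 + C / c * Metric.diam t ^ (r : ℝ)) * |q| := by ring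
  calc dist (f x) (f y) * dist z w = |p| * (dist x y * dist z w) := by rw [hfxy, mul_assoc]
    _ ≤ (1 + C / c * Metric.diam t ^ (r : ℝ)) * |q| * (dist x y * dist z w) := by gcongr
    _ = (1 + C / c * Metric.diam t ^ (r : ℝ)) * (dist (f z) (f w) * dist x y) := by
        rw [hfzw]
        ring

end Derivative

namespace RegularCantorData

variable {D : RegularCantorData}

section Cylinders

variable {n : ℕ} {u v : ℕ → Fin D.k} {x : ℝ}

theorem mem_cyl : x ∈ D.cyl n u ↔ ∀ j < n, D.ψ^[j] x ∈ Icc (D.a (u j)) (D.b (u j)) := by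
  simp [cyl]

theorem mem_cyl_succ : x ∈ D.cyl (n + 1) u ↔
    x ∈ Icc (D.a (u 0)) (D.b (u 0)) ∧ D.ψ x ∈ D.cyl n fun j => u (j + 1) := by
  simp only [mem_cyl, Nat.forall_lt_succ_left', Function.iterate_zero_apply,
    Function.iterate_succ_apply]

theorem cyl_antitone (u : ℕ → Fin D.k) : Antitone fun n => D.cyl n u :=
  fun _ _ hmn _ hx => mem_cyl.2 fun j hj => mem_cyl.1 hx j (hj.trans_le hmn)

theorem cyl_succ_subset_Icc : D.cyl (n + 1) u ⊆ Icc (D.a (u 0)) (D.b (u 0)) :=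
  fun _ hx => (mem_cyl_succ.1 hx).1

theorem iterate_mem_Icc_of_mem_cyl (hx : x ∈ D.cyl (n + 1) u) :
    D.ψ^[n] x ∈ Icc (D.a (u n)) (D.b (u n)) :=
  mem_cyl.1 hx n n.lt_succ_self

theorem Icc_subset_domain (i : Fin D.k) : Icc (D.a i) (D.b i) ⊆ D.domain :=
  subset_iUnion (fun i => Icc (D.a i) (D.b i)) i

theorem isCompact_domain : IsCompact D.domain :=
  isCompact_iUnion fun _ => isCompact_Icc

theorem eq_of_mem_Icc {i j : Fin D.k} (hi : x ∈ Icc (D.a i) (D.b i))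
    (hj : x ∈ Icc (D.a j) (D.b j)) : i = j :=
  by_contra fun h => disjoint_left.1 (D.disj i j h) hi hj

theorem eq_of_mem_cyl (hu : x ∈ D.cyl n u) (hv : x ∈ D.cyl n v) : ∀ j < n, u j = v j :=
  fun j hj => eq_of_mem_Icc (mem_cyl.1 hu j hj) (mem_cyl.1 hv j hj)

theorem admissible_of_mem_cyl (hx : x ∈ D.cyl n u) : D.Admissible n u := fun l hl =>
  D.markov _ _ ⟨D.ψ^[l + 1] x,
    ⟨D.ψ^[l] x, mem_cyl.1 hx l (by lia), (Function.iterate_succ_apply' D.ψ l x).symm⟩,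
    mem_cyl.1 hx (l + 1) hl⟩

theorem Icc_subset_image_iterate_cyl (hu : D.Admissible (n + 1) u) :
    Icc (D.a (u n)) (D.b (u n)) ⊆ D.ψ^[n] '' D.cyl (n + 1) u := by
  induction n generalizing u with
  | zero =>
    refine fun y hy => ⟨y, mem_cyl.2 fun j hj => ?_, rfl⟩
    obtain rfl := Nat.lt_one_iff.1 hj
    exact hy
  | succ n ih =>
    intro y hy
    obtain ⟨z, hz, rfl⟩ := ih (u := fun j => u (j + 1)) (fun l hl => hu (l + 1) (by lia)) hy
    obtain ⟨x, hx, rfl⟩ := hu 0 (by lia) (mem_cyl.1 hz 0 n.succ_pos)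
    exact ⟨x, mem_cyl_succ.2 ⟨hx, hz⟩, Function.iterate_succ_apply D.ψ n x⟩

theorem continuousOn_ψ_Icc (i : Fin D.k) : ContinuousOn D.ψ (Icc (D.a i) (D.b i)) :=
  D.smooth.continuousOn.mono (Icc_subset_domain i)

theorem mapsTo_ψ_cyl : MapsTo D.ψ (D.cyl (n + 1) u) (D.cyl n fun j => u (j + 1)) :=
  fun _ hx => (mem_cyl_succ.1 hx).2

theorem continuousOn_iterate_cyl : ContinuousOn D.ψ^[n] (D.cyl n u) := by
  induction n generalizing u with
  | zero => exact continuousOn_id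
  | succ n ih =>
    rw [Function.iterate_succ]
    exact ih.comp ((continuousOn_ψ_Icc (u 0)).mono cyl_succ_subset_Icc) mapsTo_ψ_cyl

theorem isClosed_cyl_succ : IsClosed (D.cyl (n + 1) u) := by
  have hcyl (n : ℕ) (u : ℕ → Fin D.k) : D.cyl (n + 1) u =
      Icc (D.a (u 0)) (D.b (u 0)) ∩ D.ψ ⁻¹' D.cyl n fun j => u (j + 1) :=
    ext fun _ => mem_cyl_succ
  have hclosed (n : ℕ) : IsClosed (D.cyl n u) := by
    induction n generalizing u with
    | zero => simp [cyl]
    | succ n ih =>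
      rw [hcyl]
      exact (continuousOn_ψ_Icc (u 0)).preimage_isClosed_of_isClosed isClosed_Icc ih
  exact hclosed _

theorem isCompact_cyl_succ : IsCompact (D.cyl (n + 1) u) :=
  isCompact_Icc.of_isClosed_subset isClosed_cyl_succ cyl_succ_subset_Icc

end Cylinders

section Expansion

variable {n : ℕ} {u : ℕ → Fin D.k} {x y : ℝ}

theorem differentiableOn_ψ : DifferentiableOn ℝ D.ψ D.domain :=
  D.smooth.differentiableOn one_ne_zero

variable (D) in
/-- A lower bound greater than `1` for the derivative of `ψ` on the domain. -/
def expansionRate : ℝ :=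
  D.expanding.choose

theorem one_lt_expansionRate : 1 < D.expansionRate :=
  D.expanding.choose_spec.1

theorem expansionRate_le_abs_derivWithin :
    ∀ ξ ∈ D.domain, D.expansionRate ≤ |derivWithin D.ψ D.domain ξ| :=
  D.expanding.choose_spec.2

theorem expansionRate_pos : 0 < D.expansionRate :=
  one_pos.trans one_lt_expansionRate

theorem expansionRate_mul_dist_le {i : Fin D.k} (hx : x ∈ Icc (D.a i) (D.b i))
    (hy : y ∈ Icc (D.a i) (D.b i)) : D.expansionRate * dist x y ≤ dist (D.ψ x) (D.ψ y) :=
  mul_dist_le_dist_of_le_abs_derivWithin differentiableOn_ψ expansionRate_le_abs_derivWithin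
    ((uIcc_subset_Icc hx hy).trans (Icc_subset_domain i))

theorem dist_le_dist_ψ {i : Fin D.k} (hx : x ∈ Icc (D.a i) (D.b i))
    (hy : y ∈ Icc (D.a i) (D.b i)) : dist x y ≤ dist (D.ψ x) (D.ψ y) :=
  (le_mul_of_one_le_left dist_nonneg one_lt_expansionRate.le).trans
    (expansionRate_mul_dist_le hx hy)

theorem injOn_ψ_Icc (i : Fin D.k) : InjOn D.ψ (Icc (D.a i) (D.b i)) := fun x hx y hy h => by
  simpa [h] using dist_le_dist_ψ hx hy

theorem expansionRate_pow_mul_dist_le (hx : x ∈ D.cyl n u) (hy : y ∈ D.cyl n u) :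
    D.expansionRate ^ n * dist x y ≤ dist (D.ψ^[n] x) (D.ψ^[n] y) := by
  induction n generalizing u x y with
  | zero => simp
  | succ n ih =>
    obtain ⟨hx, hψx⟩ := mem_cyl_succ.1 hx
    obtain ⟨hy, hψy⟩ := mem_cyl_succ.1 hy
    calc D.expansionRate ^ (n + 1) * dist x y
        = D.expansionRate ^ n * (D.expansionRate * dist x y) := by rw [pow_succ, mul_assoc]
      _ ≤ D.expansionRate ^ n * dist (D.ψ x) (D.ψ y) := by
        have := D.expansionRate_pos
        gcongr
        exact expansionRate_mul_dist_le hx hy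
      _ ≤ dist (D.ψ^[n + 1] x) (D.ψ^[n + 1] y) := ih hψx hψy

theorem dist_le_of_mem_cyl_succ (hx : x ∈ D.cyl (n + 1) u) (hy : y ∈ D.cyl (n + 1) u) :
    dist x y ≤ Metric.diam D.domain * D.expansionRate⁻¹ ^ n := by
  have hpow : 0 < D.expansionRate ^ n := pow_pos expansionRate_pos n
  rw [inv_pow, ← div_eq_mul_inv, le_div_iff₀' hpow]
  exact (expansionRate_pow_mul_dist_le (cyl_antitone u n.le_succ hx)
    (cyl_antitone u n.le_succ hy)).trans <|
    Metric.dist_le_diam_of_mem isCompact_domain.isBounded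
      (Icc_subset_domain _ (iterate_mem_Icc_of_mem_cyl hx))
      (Icc_subset_domain _ (iterate_mem_Icc_of_mem_cyl hy))

end Expansion

section BoundedDistortion

theorem convexHull_cyl_succ_subset_domain {n : ℕ} {u : ℕ → Fin D.k} :
    convexHull ℝ (D.cyl (n + 1) u) ⊆ D.domain :=
  (convexHull_min cyl_succ_subset_Icc (convex_Icc _ _)).trans (Icc_subset_domain (u 0))

theorem diam_cyl_succ_le (n : ℕ) (u : ℕ → Fin D.k) :
    Metric.diam (D.cyl (n + 1) u) ≤ Metric.diam D.domain * D.expansionRate⁻¹ ^ n :=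
  have := D.expansionRate_pos
  Metric.diam_le_of_forall_dist_le (by positivity) fun _ hx _ hy => dist_le_of_mem_cyl_succ hx hy

theorem exists_summable_distortionOnWith_ψ :
    ∃ b : ℕ → ℝ, Summable b ∧ (∀ n, 0 ≤ b n) ∧
      ∀ n u, DistortionOnWith (Real.exp (b n)) D.ψ (D.cyl (n + 1) u) := by
  obtain ⟨C, r, hr, hH⟩ := D.holder
  have hrate := D.expansionRate_pos
  set q : ℝ := D.expansionRate⁻¹ ^ (r : ℝ) with hq
  have hq1 : q < 1 :=
    Real.rpow_lt_one (by positivity) (inv_lt_one_of_one_lt₀ one_lt_expansionRate) hr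
  set E : ℝ := C / D.expansionRate * Metric.diam D.domain ^ (r : ℝ) with hE
  refine ⟨fun n => E * q ^ n, (summable_geometric_of_lt_one (by positivity) hq1).mul_left E,
    fun n => by positivity, fun n u => ?_⟩
  have hpow : (Metric.diam D.domain * D.expansionRate⁻¹ ^ n) ^ (r : ℝ) =
      Metric.diam D.domain ^ (r : ℝ) * q ^ n := by
    rw [Real.mul_rpow (by positivity) (by positivity), hq, Real.rpow_pow_comm (by positivity)]
  refine (distortionOnWith_of_holderOnWith_derivWithin differentiableOn_ψ hH hrate
    expansionRate_le_abs_derivWithin isCompact_cyl_succ.isBounded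
    convexHull_cyl_succ_subset_domain).mono_const ?_
  calc 1 + C / D.expansionRate * Metric.diam (D.cyl (n + 1) u) ^ (r : ℝ)
      ≤ 1 + C / D.expansionRate * (Metric.diam D.domain * D.expansionRate⁻¹ ^ n) ^ (r : ℝ) := by
        gcongr
        exact diam_cyl_succ_le n u
    _ = E * q ^ n + 1 := by rw [hpow, hE]; ring
    _ ≤ Real.exp (E * q ^ n) := Real.add_one_le_exp _

theorem distortionOnWith_iterate_cyl_succ {b : ℕ → ℝ}
    (hb : ∀ n u, DistortionOnWith (Real.exp (b n)) D.ψ (D.cyl (n + 1) u)) (n : ℕ)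
    (u : ℕ → Fin D.k) :
    DistortionOnWith (Real.exp (∑ j ∈ Finset.range n, b (j + 1))) D.ψ^[n] (D.cyl (n + 1) u) := by
  induction n generalizing u with
  | zero => simpa using DistortionOnWith.id
  | succ n ih =>
    rw [Finset.sum_range_succ, Real.exp_add, Function.iterate_succ]
    exact (ih _).comp (hb (n + 1) u) mapsTo_ψ_cyl ((injOn_ψ_Icc (u 0)).mono cyl_succ_subset_Icc)

variable (D) in
theorem exists_distortionOnWith_iterate_cyl_succ :
    ∃ B, ∀ n u, DistortionOnWith B D.ψ^[n] (D.cyl (n + 1) u) := by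
  obtain ⟨b, hsum, hb0, hb⟩ := D.exists_summable_distortionOnWith_ψ
  refine ⟨Real.exp (∑' j, b (j + 1)), fun n u =>
    (distortionOnWith_iterate_cyl_succ hb n u).mono_const (Real.exp_le_exp.2 ?_)⟩
  exact ((summable_nat_add_iff 1).2 hsum).sum_le_tsum _ fun j _ => hb0 (j + 1)

theorem image_iterate_cyl_succ_subset_domain (n : ℕ) (u : ℕ → Fin D.k) :
    D.ψ^[n] '' D.cyl (n + 1) u ⊆ D.domain :=
  image_subset_iff.2 fun _ hx => Icc_subset_domain (u n) (iterate_mem_Icc_of_mem_cyl hx)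

theorem ediam_cyl_succ_le (n : ℕ) (u : ℕ → Fin D.k) :
    Metric.ediam (D.cyl (n + 1) u) ≤
      Metric.ediam D.domain * ENNReal.ofReal D.expansionRate⁻¹ ^ n := by
  have hrate := D.expansionRate_pos
  rw [← ENNReal.ofReal_toReal isCompact_domain.isBounded.ediam_ne_top,
    ← ENNReal.ofReal_pow (by positivity), ← ENNReal.ofReal_mul (by positivity)]
  exact Metric.ediam_le_of_forall_dist_le fun _ hx _ hy => dist_le_of_mem_cyl_succ hx hy

variable (D) in
theorem exists_ediam_cyl_succ_le :
    ∃ A : ℝ≥0∞, A ≠ 0 ∧ A ≠ ⊤ ∧ ∃ q < 1, ∀ n u,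
      Metric.ediam (D.cyl (n + 1) u) ≤ A * q ^ n ∧
      ∀ x ∈ D.cyl (n + 1) u, ∀ y ∈ D.cyl (n + 1) u,
        Metric.ediam (D.cyl (n + 1) u) * edist (D.ψ^[n] x) (D.ψ^[n] y) ≤ A * edist x y := by
  obtain ⟨B, hB⟩ := D.exists_distortionOnWith_iterate_cyl_succ
  have hdom : Metric.ediam D.domain ≠ ⊤ := isCompact_domain.isBounded.ediam_ne_top
  set A := max 1 (max (Metric.ediam D.domain) (ENNReal.ofReal B * Metric.ediam D.domain))
  have hdomA : Metric.ediam D.domain ≤ A := (le_max_left ..).trans (le_max_right ..)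
  have hBA : ENNReal.ofReal B * Metric.ediam D.domain ≤ A :=
    (le_max_right ..).trans (le_max_right ..)
  refine ⟨A, (one_pos.trans_le (le_max_left ..)).ne', by finiteness,
    ENNReal.ofReal D.expansionRate⁻¹, ?_, fun n u => ⟨?_, fun x hx y hy => ?_⟩⟩
  · exact ENNReal.ofReal_lt_one.2 (inv_lt_one_of_one_lt₀ one_lt_expansionRate)
  · exact (ediam_cyl_succ_le n u).trans (by gcongr)
  · calc Metric.ediam (D.cyl (n + 1) u) * edist (D.ψ^[n] x) (D.ψ^[n] y)
        ≤ ENNReal.ofReal B * Metric.ediam (D.ψ^[n] '' D.cyl (n + 1) u) * edist x y :=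
          (hB n u).ediam_mul_edist_le hx hy
      _ ≤ A * edist x y := by
        gcongr
        refine le_trans ?_ hBA
        gcongr
        exact image_iterate_cyl_succ_subset_domain n u

end BoundedDistortion

end RegularCantorData

section Counting

variable {ι : Type*} {S T : Finset ι} {g : ι → ℝ≥0∞} {c : ℝ≥0∞} {n : ℕ}

theorem sum_le_natCast_mul_of_card_le (hg : ∀ i ∈ S, g i ≤ c) (hS : S.card ≤ n) :
    ∑ i ∈ S, g i ≤ n * c := by
  calc ∑ i ∈ S, g i ≤ S.card • c := Finset.sum_le_card_nsmul S g c hg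
    _ ≤ n * c := by
      rw [nsmul_eq_mul]
      gcongr

theorem lt_sum_sdiff [DecidableEq ι] (hg : ∀ i ∈ S, g i ≤ c) (hT : T.card ≤ n)
    (h : c * (n + 1) < ∑ i ∈ S, g i) : c < ∑ i ∈ S \ T, g i := by
  by_contra! hle
  refine h.not_ge ?_
  calc ∑ i ∈ S, g i = ∑ i ∈ S ∩ T, g i + ∑ i ∈ S \ T, g i :=
        (Finset.sum_inter_add_sum_sdiff S T g).symm
    _ ≤ n * c + c := by
        gcongr
        exact sum_le_natCast_mul_of_card_le (fun i hi => hg i (Finset.mem_inter.1 hi).1)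
          ((Finset.card_le_card Finset.inter_subset_right).trans hT)
    _ = c * (n + 1) := by ring

theorem nontrivial_of_lt_sum (hg : ∀ i ∈ S, g i ≤ c) (h : c < ∑ i ∈ S, g i) : S.Nontrivial := by
  rw [← Finset.one_lt_card_iff_nontrivial]
  by_contra! hcard
  exact h.not_ge (by simpa using sum_le_natCast_mul_of_card_le hg hcard)

end Counting

namespace RegularCantorData

variable {D : RegularCantorData}

section Recurrence

variable (D) in
/-- The points of `K` that start in the interval of the letter `a` and return to it infinitely
often. -/
def recurrentSet (a : Fin D.k) : Set ℝ :=
  {x | x ∈ D.K ∧ x ∈ Icc (D.a a) (D.b a) ∧ ∃ᶠ n in atTop, D.ψ^[n] x ∈ Icc (D.a a) (D.b a)}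

theorem mem_K_iff {x : ℝ} : x ∈ D.K ↔ x ∈ D.domain ∧ D.ψ x ∈ D.K :=
  mem_maximalInvariantSet_iff

theorem iterate_mem_K {x : ℝ} (hx : x ∈ D.K) (j : ℕ) : D.ψ^[j] x ∈ D.K := fun n => by
  rw [← Function.iterate_add_apply]
  exact hx _

theorem dimH_K_inter_preimage_iterate_le (S : Set ℝ) (j : ℕ) :
    dimH (D.K ∩ D.ψ^[j] ⁻¹' S) ≤ dimH S := by
  induction j with
  | zero => exact dimH_mono inter_subset_right
  | succ j ih =>
    refine le_trans ?_ ih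
    set T := D.K ∩ D.ψ^[j] ⁻¹' S
    have hsub : D.K ∩ D.ψ^[j + 1] ⁻¹' S ⊆ ⋃ i, Icc (D.a i) (D.b i) ∩ D.ψ ⁻¹' T := by
      rintro x ⟨hxK, hxS⟩
      obtain ⟨hxdom, hψx⟩ := mem_K_iff.1 hxK
      obtain ⟨i, hi⟩ := mem_iUnion.1 hxdom
      exact mem_iUnion.2 ⟨i, hi, hψx, hxS⟩
    refine (dimH_mono hsub).trans ?_
    rw [dimH_iUnion]
    refine iSup_le fun i => dimH_le_dimH_of_edist_le_edist (fun _ hx => hx.2) fun x hx y hy => ?_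
    rw [edist_dist, edist_dist]
    exact ENNReal.ofReal_le_ofReal (dist_le_dist_ψ hx.1 hy.1)

theorem exists_iterate_mem_recurrentSet {x : ℝ} (hx : x ∈ D.K) :
    ∃ a j, D.ψ^[j] x ∈ D.recurrentSet a := by
  have hletter : ∃ᶠ n in atTop, ∃ a, D.ψ^[n] x ∈ Icc (D.a a) (D.b a) :=
    .of_forall fun n => mem_iUnion.1 (hx n)
  obtain ⟨a, ha⟩ := frequently_exists.1 hletter
  obtain ⟨j, hj⟩ := ha.exists
  refine ⟨a, j, iterate_mem_K hx j, hj, ?_⟩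
  rw [← map_add_atTop_eq_nat j, frequently_map] at ha
  simpa only [Function.iterate_add_apply] using ha

theorem dimH_K_le_iSup_dimH_recurrentSet : dimH D.K ≤ ⨆ a, dimH (D.recurrentSet a) := by
  have hsub : D.K ⊆ ⋃ a, ⋃ j : ℕ, D.K ∩ D.ψ^[j] ⁻¹' D.recurrentSet a := fun x hx => by
    obtain ⟨a, j, hj⟩ := exists_iterate_mem_recurrentSet hx
    exact mem_iUnion₂.2 ⟨a, j, hx, hj⟩
  refine (dimH_mono hsub).trans ?_
  simp only [dimH_iUnion]
  exact iSup_mono fun a => iSup_le fun j => dimH_K_inter_preimage_iterate_le _ j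

end Recurrence

section Loops

variable {n : ℕ}

/-- An infinite word with prefix `u`. Its letters beyond the prefix are irrelevant; reading the
indices modulo `n + 1` is merely a convenient choice. -/
def extendWord {α : Type*} (u : Fin (n + 1) → α) (j : ℕ) : α :=
  u (Fin.ofNat (n + 1) j)

theorem extendWord_val {α : Type*} (u : Fin (n + 1) → α) (j : Fin (n + 1)) :
    extendWord u j = u j := by
  simp [extendWord]

theorem extendWord_apply_of_le {α : Type*} (w : ℕ → α) {j : ℕ} (hj : j ≤ n) :
    extendWord (fun i : Fin (n + 1) => w i) j = w j := by
  simp [extendWord, Nat.mod_eq_of_lt (Nat.lt_succ_of_le hj)]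

open Classical in
variable (D) in
/-- The admissible words with `n + 1` letters whose first and last letters are both `a`. -/
def loops (a : Fin D.k) (n : ℕ) : Finset (Fin (n + 1) → Fin D.k) :=
  {u | extendWord u 0 = a ∧ extendWord u n = a ∧ D.Admissible (n + 1) (extendWord u)}

variable {a : Fin D.k} {x : ℝ}

theorem mem_loops {u : Fin (n + 1) → Fin D.k} : u ∈ D.loops a n ↔
    extendWord u 0 = a ∧ extendWord u n = a ∧ D.Admissible (n + 1) (extendWord u) := by
  simp [loops]

theorem eq_of_mem_cyl_extendWord {u v : Fin (n + 1) → Fin D.k}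
    (hu : x ∈ D.cyl (n + 1) (extendWord u)) (hv : x ∈ D.cyl (n + 1) (extendWord v)) : u = v :=
  funext fun j => by simpa only [extendWord_val] using eq_of_mem_cyl hu hv j j.2

theorem exists_mem_loops_of_iterate_mem_Icc (hx : x ∈ D.K) (h0 : x ∈ Icc (D.a a) (D.b a))
    (hn : D.ψ^[n] x ∈ Icc (D.a a) (D.b a)) :
    ∃ u ∈ D.loops a n, x ∈ D.cyl (n + 1) (extendWord u) := by
  choose w hw using fun j => mem_iUnion.1 (hx j)
  have hcyl : x ∈ D.cyl (n + 1) (extendWord fun i : Fin (n + 1) => w i) := mem_cyl.2 fun j hj => by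
    rw [extendWord_apply_of_le w (Nat.le_of_lt_succ hj)]
    exact hw j
  refine ⟨_, mem_loops.2 ⟨?_, ?_, admissible_of_mem_cyl hcyl⟩, hcyl⟩
  · rw [extendWord_apply_of_le w n.zero_le]
    exact eq_of_mem_Icc (hw 0) h0
  · rw [extendWord_apply_of_le w le_rfl]
    exact eq_of_mem_Icc (hw n) hn

theorem recurrentSet_subset_setOf_frequently : D.recurrentSet a ⊆
    {x | ∃ᶠ n in atTop, ∃ u : D.loops a n, x ∈ D.cyl (n + 1) (extendWord u.1)} := by
  rintro x ⟨hxK, hxa, hfreq⟩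
  refine hfreq.mono fun n hn => ?_
  obtain ⟨u, hu, hxu⟩ := exists_mem_loops_of_iterate_mem_Icc hxK hxa hn
  exact ⟨⟨u, hu⟩, hxu⟩

theorem exists_loops_lt_sum_ediam_rpow {s : ℝ≥0} (hs : s < dimH D.K) {C : ℝ≥0∞} (hC : C ≠ ⊤) :
    ∃ a, ∃ n > 0, C * (n + 1) <
      ∑ u ∈ D.loops a n, Metric.ediam (D.cyl (n + 1) (extendWord u)) ^ (s : ℝ) := by
  obtain ⟨A, -, hA, q, hq, hAq⟩ := D.exists_ediam_cyl_succ_le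
  obtain ⟨a, ha⟩ := lt_iSup_iff.1 (hs.trans_le D.dimH_K_le_iSup_dimH_recurrentSet)
  have hfreq := frequently_lt_sum_ediam_rpow_of_lt_dimH hA hq
    (t := fun n (u : D.loops a n) => D.cyl (n + 1) (extendWord u.1)) (fun n u => (hAq n _).1)
    (ha.trans_le (dimH_mono recurrentSet_subset_setOf_frequently)) hC
  obtain ⟨n, hn, hn0⟩ := (hfreq.and_eventually (eventually_gt_atTop 0)).exists
  refine ⟨a, n, hn0, ?_⟩
  rwa [← Finset.sum_coe_sort]

theorem le_dimH_maximalInvariantSet_of_subset_loops {F : Finset (Fin (n + 1) → Fin D.k)}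
    (hF : F ⊆ D.loops a n) (hnt : F.Nontrivial) {A : ℝ≥0∞} (hA0 : A ≠ 0) (hA : A ≠ ⊤)
    (hAcyl : ∀ u, ∀ x ∈ D.cyl (n + 1) u, ∀ y ∈ D.cyl (n + 1) u,
      Metric.ediam (D.cyl (n + 1) u) * edist (D.ψ^[n] x) (D.ψ^[n] y) ≤ A * edist x y)
    {s : ℝ≥0}
    (hsum : A ^ (s : ℝ) ≤ ∑ u ∈ F, Metric.ediam (D.cyl (n + 1) (extendWord u)) ^ (s : ℝ)) :
    s ≤ dimH (maximalInvariantSet D.ψ^[n] (⋃ u : F, D.cyl (n + 1) (extendWord u.1))) := by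
  have hloop (u : F) := mem_loops.1 (hF u.2)
  have : Nontrivial F := (Finset.Nontrivial.coe hnt).coe_sort
  refine le_dimH_maximalInvariantSet (J := Icc (D.a a) (D.b a))
    (r := fun u => Metric.ediam (D.cyl (n + 1) (extendWord u.1)) / A)
    (nonempty_Icc.2 (D.hab a).le) (fun u => isCompact_cyl_succ)
    (fun u => continuousOn_iterate_cyl.mono (cyl_antitone _ n.le_succ)) ?_ ?_ ?_ ?_ ?_
  · exact fun u v huv => disjoint_left.2 fun x hu hv =>
      huv (Subtype.ext (eq_of_mem_cyl_extendWord hu hv))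
  · intro u
    rw [← (hloop u).1]
    exact cyl_succ_subset_Icc
  · intro u
    rw [← (hloop u).2.1]
    exact Icc_subset_image_iterate_cyl (hloop u).2.2
  · intro u x hx y hy
    rw [ENNReal.mul_comm_div, ← mul_div_assoc]
    refine ENNReal.div_le_of_le_mul ?_
    rw [mul_comm (edist x y)]
    exact hAcyl _ x hx y hy
  · have hAs0 : A ^ (s : ℝ) ≠ 0 := (ENNReal.rpow_pos (pos_iff_ne_zero.2 hA0) hA).ne'
    have hAs : A ^ (s : ℝ) ≠ ⊤ := ENNReal.rpow_ne_top_of_nonneg s.coe_nonneg hA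
    simp_rw [ENNReal.div_rpow_of_nonneg _ _ s.coe_nonneg, div_eq_mul_inv]
    rw [← Finset.sum_mul, ← div_eq_mul_inv, Finset.sum_coe_sort F fun u =>
      Metric.ediam (D.cyl (n + 1) (extendWord u)) ^ (s : ℝ)]
    rwa [ENNReal.le_div_iff_mul_le (.inl hAs0) (.inl hAs), one_mul]

end Loops

section RemovedCylinder

variable {m n : ℕ} {w : ℕ → Fin D.k} {F : Finset (Fin (n + 1) → Fin D.k)}

theorem maximalInvariantSet_iterate_subset_Kremoved (hn : 0 < n) (hm : 2 * n < m)
    (hF : ∀ u ∈ F, ∀ p ∈ Finset.Icc 1 n, u ≠ fun j : Fin (n + 1) => w (p + j)) :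
    maximalInvariantSet D.ψ^[n] (⋃ u : F, D.cyl (n + 1) (extendWord u.1)) ⊆ D.Kremoved m w := by
  intro x hx i
  have hblock (j : ℕ) : ∃ u ∈ F, D.ψ^[n * j] x ∈ D.cyl (n + 1) (extendWord u) := by
    obtain ⟨⟨u, hu⟩, hxu⟩ := mem_iUnion.1 (hx j)
    exact ⟨u, hu, by rwa [Function.iterate_mul]⟩
  have hmod := Nat.mod_lt i hn
  have hdiv := Nat.div_add_mod i n
  constructor
  · obtain ⟨u, -, hxu⟩ := hblock (i / n)
    have hletter := mem_cyl.1 hxu (i % n) (by lia)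
    rw [← Function.iterate_add_apply, add_comm, hdiv] at hletter
    exact Icc_subset_domain _ hletter
  · intro hcyl
    obtain ⟨u, hu, hxu⟩ := hblock (i / n + 1)
    refine hF u hu (n - i % n) (Finset.mem_Icc.2 (by lia)) (funext fun j => ?_)
    have hsub : D.ψ^[n * (i / n + 1)] x ∈ D.cyl (n + 1) fun j => w (n - i % n + j) :=
      mem_cyl.2 fun j hj => by
        have hletter := mem_cyl.1 hcyl (n - i % n + j) (by lia)
        rw [← Function.iterate_add_apply] at hletter ⊢
        have htime : n - i % n + j + i = j + n * (i / n + 1) := by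
          rw [mul_add_one]
          lia
        rwa [htime] at hletter
    rw [← extendWord_val u j]
    exact eq_of_mem_cyl hxu hsub j j.2

theorem exists_forall_le_dimH_Kremoved {s : ℝ≥0} (hs : s < dimH D.K) :
    ∃ m₀, ∀ m ≥ m₀, ∀ w, s ≤ dimH (D.Kremoved m w) := by
  classical
  obtain ⟨A, hA0, hA, q, hq, hAq⟩ := D.exists_ediam_cyl_succ_le
  obtain ⟨a, n, hn, hlt⟩ :=
    exists_loops_lt_sum_ediam_rpow hs (ENNReal.rpow_ne_top_of_nonneg s.coe_nonneg hA)
  have hle (u : Fin (n + 1) → Fin D.k) :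
      Metric.ediam (D.cyl (n + 1) (extendWord u)) ^ (s : ℝ) ≤ A ^ (s : ℝ) := by
    gcongr
    exact ((hAq n _).1).trans (mul_le_of_le_one_right' (pow_le_one' hq.le n))
  refine ⟨2 * n + 1, fun m hm w => ?_⟩
  set subwords : Finset (Fin (n + 1) → Fin D.k) :=
    (Finset.Icc 1 n).image fun p (j : Fin (n + 1)) => w (p + j)
  have hcard : subwords.card ≤ n := Finset.card_image_le.trans_eq (Nat.card_Icc 1 n)
  set F := D.loops a n \ subwords
  have hFlt : A ^ (s : ℝ) < ∑ u ∈ F, Metric.ediam (D.cyl (n + 1) (extendWord u)) ^ (s : ℝ) :=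
    lt_sum_sdiff (fun u _ => hle u) hcard hlt
  calc (s : ℝ≥0∞)
      ≤ dimH (maximalInvariantSet D.ψ^[n] (⋃ u : F, D.cyl (n + 1) (extendWord u.1))) :=
        le_dimH_maximalInvariantSet_of_subset_loops Finset.sdiff_subset
          (nontrivial_of_lt_sum (fun u _ => hle u) hFlt) hA0 hA (fun u => (hAq n u).2) hFlt.le
    _ ≤ dimH (D.Kremoved m w) :=
      dimH_mono <| maximalInvariantSet_iterate_subset_Kremoved hn (by lia) fun u hu p hp h =>
        (Finset.mem_sdiff.1 hu).2 (Finset.mem_image.2 ⟨p, hp, h.symm⟩)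

end RemovedCylinder

end RegularCantorData

/-- Removing from a regular Cantor set `K` a cylinder of depth `m`
costs arbitrarily little Hausdorff dimension as `m → ∞`: for every `ε > 0` there is
`m₀` such that for every admissible word `b̲` of length `m ≥ m₀`,
`HD(K_b̲) ≥ HD(K) − ε`. -/
theorem dimension_loss_of_removed_cylinder (D : RegularCantorData) :
    ∀ ε : ℝ≥0∞, 0 < ε → ∃ m₀ : ℕ, ∀ m : ℕ, m₀ ≤ m → ∀ w : ℕ → Fin D.k,
      D.Admissible m w → dimH D.K - ε ≤ dimH (D.Kremoved m w) := by
  intro ε hε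
  obtain hK | hK := eq_or_ne (dimH D.K) 0
  · exact ⟨0, fun m _ w _ => by simp [hK]⟩
  obtain ⟨s, hεs, hsK⟩ := ENNReal.lt_iff_exists_nnreal_btwn.1
    (ENNReal.sub_lt_self (Real.dimH_ne_top D.K) hK hε.ne')
  obtain ⟨m₀, hm₀⟩ := RegularCantorData.exists_forall_le_dimH_Kremoved hsK
  exact ⟨m₀, fun m hm w _ => hεs.le.trans (hm₀ m hm w)⟩
end
end

section
/- Let Λ be a compact invariant set of a homeomorphism φ: M → M of a metric space M and f: M → ℝ a continuous function. Suppose x₀ ∈ Λ and y₀ ∈ Λ are such that there is a strictly increasing sequence (n_k) of natural numbers with φ^{n_k}(x₀) → y₀ and f(y₀) = limsup_{n→∞} f(φⁿ(x₀)). Then f(y₀) ≥ f(φⁿ(y₀)) for all n ∈ ℤ; i.e. f attains at y₀ the supremum of f along the full orbit of y₀. -/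
open Set Filter Topology

/-- The iterate `φⁿ`, `n : ℤ`, of a homeomorphism. -/
def hZIter {M : Type*} [TopologicalSpace M] (φ : M ≃ₜ M) (n : ℤ) (x : M) : M :=
  if 0 ≤ n then (⇑φ)^[n.toNat] x else (⇑φ.symm)^[(-n).toNat] x

/-!
The translations `n ↦ k + n` of `ℤ`, backward ones included, preserve the filter `atTop`. Viewing a
cluster point `y` of the forward orbit of `x` as a cluster point of `φⁿ x` when `n : ℤ` tends to
`∞`, one sees that every `φᵏ y` with `k : ℤ` is again a cluster point. At such a point a lower
semicontinuous function is at most its limsup along the orbit.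
-/

theorem bddAbove_range_comp_iterate_of_mapsTo {X α : Type*} [Preorder α] {g : X → X} {s : Set X}
    {f : X → α} {x : X} (hg : MapsTo g s s) (hf : BddAbove (f '' s)) (hx : x ∈ s) :
    BddAbove (range fun n : ℕ => f (g^[n] x)) :=
  hf.mono (range_subset_iff.2 fun n => mem_image_of_mem f (hg.iterate n hx))

theorem le_limsup_comp_of_mapClusterPt {ι X α : Type*} [TopologicalSpace X]
    [ConditionallyCompleteLinearOrder α] {l : Filter ι} {u : ι → X} {f : X → α} {x : X}
    (hf : LowerSemicontinuousAt f x) (hx : MapClusterPt x l u)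
    (hbdd : IsBoundedUnder (· ≤ ·) l (f ∘ u)) : f x ≤ limsup (f ∘ u) l := by
  have frequently_lt {c : α} (hc : c < f x) : ∃ᶠ i in l, c < f (u i) := hx.frequently (hf c hc)
  by_contra! hlt
  have hcobdd : IsCoboundedUnder (· ≤ ·) l (f ∘ u) :=
    .of_frequently_ge ((frequently_lt hlt).mono fun _ => le_of_lt)
  exact hlt.not_ge ((le_limsup_iff hcobdd hbdd).2 fun _ => frequently_lt)

section Homeomorph

variable {M : Type*} [TopologicalSpace M] (φ : M ≃ₜ M)

theorem homeomorph_zpow_natCast_apply (n : ℕ) (x : M) : (φ ^ (n : ℤ)) x = φ^[n] x := by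
  rw [zpow_natCast, hom_coe_pow (fun ψ : M ≃ₜ M => ⇑ψ) rfl (fun _ _ => rfl)]

theorem hZIter_eq_zpow_apply (n : ℤ) (x : M) : hZIter φ n x = (φ ^ n) x := by
  unfold hZIter
  split_ifs with hn
  · rw [← homeomorph_zpow_natCast_apply, Int.toNat_of_nonneg hn]
  · change (⇑φ⁻¹)^[_] x = _
    rw [← homeomorph_zpow_natCast_apply, Int.toNat_of_nonneg (by lia), inv_zpow', neg_neg]

variable {φ} {x y : M}

theorem mapClusterPt_iterate_iff_zpow :
    MapClusterPt y atTop (fun n : ℕ => φ^[n] x) ↔ MapClusterPt y atTop fun n : ℤ => (φ ^ n) x := by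
  simp only [← homeomorph_zpow_natCast_apply, ← Nat.map_cast_int_atTop]
  exact mapClusterPt_comp (u := fun n : ℤ => (φ ^ n) x)

theorem mapClusterPt_iterate_zpow_apply (hy : MapClusterPt y atTop fun n : ℕ => φ^[n] x) (k : ℤ) :
    MapClusterPt ((φ ^ k) y) atTop fun n : ℕ => φ^[n] x := by
  rw [mapClusterPt_iterate_iff_zpow] at hy ⊢
  have htranslate : MapClusterPt ((φ ^ k) y) atTop fun n : ℤ => (φ ^ (k + n)) x := by
    simp only [zpow_add]
    exact hy.continuousAt_comp (φ ^ k).continuous.continuousAt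
  exact htranslate.of_comp (tendsto_atTop_add_const_left atTop k tendsto_id)

end Homeomorph

theorem limsup_accumulation_maximizes_orbit_general {M α : Type*} [TopologicalSpace M]
    [ConditionallyCompleteLinearOrder α] (φ : M ≃ₜ M) {f : M → α} (hf : LowerSemicontinuous f)
    {x₀ y₀ : M} (hbdd : IsBoundedUnder (· ≤ ·) atTop fun n : ℕ => f (φ^[n] x₀))
    (hy₀ : MapClusterPt y₀ atTop fun n : ℕ => φ^[n] x₀)
    (hval : limsup (fun n : ℕ => f (φ^[n] x₀)) atTop ≤ f y₀) (n : ℤ) :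
    f (hZIter φ n y₀) ≤ f y₀ := by
  rw [hZIter_eq_zpow_apply]
  have hcluster : MapClusterPt ((φ ^ n) y₀) atTop fun n : ℕ => φ^[n] x₀ :=
    mapClusterPt_iterate_zpow_apply hy₀ n
  exact (le_limsup_comp_of_mapClusterPt (hf _) hcluster hbdd).trans hval

/-- Let `Λ` be a compact invariant set of a homeomorphism `φ` of a
metric space and `f` continuous. If `x₀, y₀ ∈ Λ`, `(n_k)` is strictly increasing with
`φ^{n_k}(x₀) → y₀` and `f(y₀) = limsup_{n→∞} f(φⁿ(x₀))`, then `f(y₀) ≥ f(φⁿ(y₀))`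
for all `n ∈ ℤ`. -/
theorem limsup_accumulation_maximizes_orbit {M : Type*} [MetricSpace M]
    (φ : M ≃ₜ M) (Λ : Set M) (hcomp : IsCompact Λ) (hinv : φ '' Λ = Λ)
    (f : M → ℝ) (hf : Continuous f)
    (x₀ y₀ : M) (hx₀ : x₀ ∈ Λ) (hy₀ : y₀ ∈ Λ)
    (nk : ℕ → ℕ) (hmono : StrictMono nk)
    (hconv : Tendsto (fun k => (⇑φ)^[nk k] x₀) atTop (𝓝 y₀))
    (hval : f y₀ = limsup (fun n : ℕ => f ((⇑φ)^[n] x₀)) atTop) :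
    ∀ n : ℤ, f (hZIter φ n y₀) ≤ f y₀ := by
  have hbdd := bddAbove_range_comp_iterate_of_mapsTo (mapsTo_iff_image_subset.2 hinv.subset)
    (hcomp.bddAbove_image hf.continuousOn) hx₀
  exact limsup_accumulation_maximizes_orbit_general φ hf.lowerSemicontinuous
    hbdd.isBoundedUnder_of_range (hconv.mapClusterPt.of_comp hmono.tendsto_atTop) hval.ge
end

section
/- Let Λ be a compact invariant set of a homeomorphism φ: M → M of a metric space M and f: M → ℝ a continuous function. Then L(f,Λ) ⊂ M(f,Λ): every value limsup_{n→∞} f(φⁿ(x)) with x ∈ Λ equals sup_{n∈ℤ} f(φⁿ(y)) for some y ∈ Λ. -/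
/-!
The limit superior `r` of `f` along the forward orbit of `x` is a cluster value of `f` along this
orbit, so by compactness it equals `f y` for some point `y ∈ Λ` of the ω-limit set of `x`. The
ω-limit set is invariant under all powers of `φ`, including the negative ones, and `f ≤ r` on it.
Hence `r` is the maximum of `f` over the two-sided orbit of `y`, attained at `y` itself.
-/

open Set Filter Topology

/-- The Markov dynamical spectrum `M(f,Λ) = { sup_{n∈ℤ} f(φⁿ(x)) : x ∈ Λ }`. -/
def markovSpec {M : Type*} [TopologicalSpace M] (φ : M ≃ₜ M) (f : M → ℝ) (Λ : Set M) :
    Set ℝ := {r | ∃ x ∈ Λ, r = ⨆ n : ℤ, f (hZIter φ n x)}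

/-- The Lagrange dynamical spectrum `L(f,Λ) = { limsup_{n→∞} f(φⁿ(x)) : x ∈ Λ }`. -/
def lagrangeSpec {M : Type*} [TopologicalSpace M] (φ : M ≃ₜ M) (f : M → ℝ) (Λ : Set M) :
    Set ℝ := {r | ∃ x ∈ Λ, r = limsup (fun n : ℕ => f ((⇑φ)^[n] x)) atTop}

open scoped omegaLimit

section ClusterPoints

variable {ι X Y : Type*} [TopologicalSpace X] [TopologicalSpace Y]
  {l : Filter ι} {u : ι → X} {s : Set X} {f : X → Y}

lemma mapClusterPt_comp_of_continuousWithinAt {x : X} (hf : ContinuousWithinAt f s x)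
    (hx : MapClusterPt x l u) (hu : ∀ᶠ i in l, u i ∈ s) : MapClusterPt (f x) l (f ∘ u) :=
  hx.tendsto_comp' <| hf.mono_left <| inf_le_inf_left _ <| le_principal_iff.2 hu

lemma exists_mem_mapClusterPt_of_mapClusterPt_comp [T2Space Y] {y : Y} (hs : IsCompact s)
    (hf : ContinuousOn f s) (hu : ∀ᶠ i in l, u i ∈ s) (hy : MapClusterPt y l (f ∘ u)) :
    ∃ x ∈ s, MapClusterPt x l u ∧ f x = y := by
  obtain ⟨U, hUl, hUy⟩ := mapClusterPt_iff_ultrafilter.1 hy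
  have hUs : ∀ᶠ i in U, u i ∈ s := hUl hu
  obtain ⟨x, hxs, hUx : Tendsto u U (𝓝 x)⟩ := hs.ultrafilter_le_nhds' (U.map u) hUs
  have hUfx : Tendsto (f ∘ u) U (𝓝 (f x)) :=
    (hf x hxs).tendsto.comp (tendsto_nhdsWithin_iff.2 ⟨hUx, hUs⟩)
  exact ⟨x, hxs, mapClusterPt_iff_ultrafilter.2 ⟨U, hUl, hUx⟩, tendsto_nhds_unique hUfx hUy⟩

end ClusterPoints

section Limsup

variable {ι X α : Type*} [TopologicalSpace X] [TopologicalSpace α]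
  {l : Filter ι} {u : ι → X} {s : Set X} {f : X → α}

lemma isBoundedUnder_le_comp_of_isCompact [LinearOrder α] [ClosedIciTopology α] [Nonempty α]
    (hs : IsCompact s) (hf : ContinuousOn f s) (hu : ∀ᶠ i in l, u i ∈ s) :
    IsBoundedUnder (· ≤ ·) l (f ∘ u) :=
  (hs.bddAbove_image hf).isBoundedUnder (f := map u l) hu

lemma isBoundedUnder_ge_comp_of_isCompact [LinearOrder α] [ClosedIicTopology α] [Nonempty α]
    (hs : IsCompact s) (hf : ContinuousOn f s) (hu : ∀ᶠ i in l, u i ∈ s) :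
    IsBoundedUnder (· ≥ ·) l (f ∘ u) :=
  isBoundedUnder_le_comp_of_isCompact (α := αᵒᵈ) hs hf hu

variable [ConditionallyCompleteLinearOrder α] [OrderTopology α]

lemma le_limsup_comp_of_mapClusterPt_s16 {x : X} (hs : IsCompact s) (hf : ContinuousOn f (closure s))
    (hu : ∀ᶠ i in l, u i ∈ s) (hx : MapClusterPt x l u) : f x ≤ limsup (f ∘ u) l := by
  have : Nonempty α := ⟨f x⟩
  have huc : ∀ᶠ i in l, u i ∈ closure s := hu.mono fun _ hi => subset_closure hi
  have hxc : x ∈ closure s := isClosed_closure.mem_of_mapClusterPt hx huc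
  exact (mapClusterPt_comp_of_continuousWithinAt (hf x hxc) hx huc).le_limsup
    (isBoundedUnder_le_comp_of_isCompact hs (hf.mono subset_closure) hu)

lemma exists_mem_mapClusterPt_eq_limsup_comp [l.NeBot] (hs : IsCompact s) (hf : ContinuousOn f s)
    (hu : ∀ᶠ i in l, u i ∈ s) : ∃ x ∈ s, MapClusterPt x l u ∧ f x = limsup (f ∘ u) l := by
  have : Nonempty α := hu.exists.nonempty.map (f ∘ u)
  exact exists_mem_mapClusterPt_of_mapClusterPt_comp hs hf hu <| MapClusterPt.limsup
    (isBoundedUnder_ge_comp_of_isCompact hs hf hu).isCoboundedUnder_le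
    (isBoundedUnder_le_comp_of_isCompact hs hf hu)

end Limsup

section Iterates

variable {X : Type*} [TopologicalSpace X] (φ : X ≃ₜ X)

lemma coe_homeomorph_pow (n : ℕ) : ⇑(φ ^ n) = φ^[n] :=
  hom_coe_pow _ rfl (fun _ _ => rfl) φ n

lemma hZIter_eq_zpow (m : ℤ) (x : X) : hZIter φ m x = (φ ^ m) x := by
  obtain ⟨n, rfl | rfl⟩ := m.eq_nat_or_neg
  · simp [hZIter, coe_homeomorph_pow]
  · rcases n.eq_zero_or_pos with rfl | hn
    · simp [hZIter]
    · have hsymm : φ ^ (-n : ℤ) = φ.symm ^ n := by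
        rw [zpow_neg, zpow_natCast, ← inv_pow]
        rfl
      simp [hZIter, hsymm, coe_homeomorph_pow, hn.ne']

lemma eventually_zpow_comp_iterate (m : ℤ) :
    ∀ᶠ n : ℕ in atTop, ⇑(φ ^ m) ∘ φ^[n] = φ^[(n + m).toNat] := by
  filter_upwards [eventually_ge_atTop (-m).toNat] with n hn
  have hnm : ((n + m).toNat : ℤ) = m + n := by lia
  rw [← coe_homeomorph_pow, ← coe_homeomorph_pow, ← zpow_natCast φ (n + m).toNat, hnm, zpow_add,
    zpow_natCast]
  rfl

lemma tendsto_toNat_natCast_add_atTop (m : ℤ) :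
    Tendsto (fun n : ℕ => (n + m).toNat) atTop atTop :=
  tendsto_atTop_mono (fun n => by lia) (tendsto_sub_atTop_nat (-m).toNat)

lemma mapsTo_zpow_omegaLimit (m : ℤ) (s : Set X) :
    MapsTo ⇑(φ ^ m) (ω⁺ (fun n : ℕ => φ^[n]) s) (ω⁺ (fun n : ℕ => φ^[n]) s) := by
  have hshift : ∀ᶠ n : ℕ in atTop, EqOn (⇑(φ ^ m) ∘ φ^[n]) (φ^[(n + m).toNat] ∘ id) s :=
    (eventually_zpow_comp_iterate φ m).mono fun _ hn => hn ▸ eqOn_refl _ _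
  exact (mapsTo_omegaLimit' s (ϕ' := fun n : ℕ => φ^[(n + m).toNat]) (mapsTo_id s) hshift
    (φ ^ m).continuous).mono_right
      (omegaLimit_subset_of_tendsto _ s (tendsto_toNat_natCast_add_atTop m))

end Iterates

section Spectra

variable {M : Type*} [TopologicalSpace M] {φ : M ≃ₜ M} {Λ : Set M} {f : M → ℝ}

lemma mem_markovSpec_of_forall_zpow_le {y : M} (hy : y ∈ Λ)
    (hle : ∀ m : ℤ, f ((φ ^ m) y) ≤ f y) : f y ∈ markovSpec φ f Λ := by
  have hmax : IsGreatest (range fun m : ℤ => f (hZIter φ m y)) (f y) :=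
    ⟨⟨0, by simp [hZIter_eq_zpow]⟩, forall_mem_range.2 fun m => by
      simpa only [hZIter_eq_zpow] using hle m⟩
  exact ⟨y, hy, hmax.csSup_eq.symm⟩

theorem lagrangeSpec_subset_markovSpec_general (hcomp : IsCompact Λ) (hinv : MapsTo φ Λ Λ)
    (hf : ContinuousOn f (closure Λ)) : lagrangeSpec φ f Λ ⊆ markovSpec φ f Λ := by
  rintro _ ⟨x, hx, rfl⟩
  have horbit : ∀ᶠ n : ℕ in atTop, φ^[n] x ∈ Λ := .of_forall fun n => hinv.iterate n hx
  obtain ⟨y, hyΛ, hyω, hfy⟩ :=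
    exists_mem_mapClusterPt_eq_limsup_comp hcomp (hf.mono subset_closure) horbit
  have hle (m : ℤ) : f ((φ ^ m) y) ≤ f y := by
    rw [hfy]
    apply le_limsup_comp_of_mapClusterPt_s16 hcomp hf horbit
    rw [← mem_omegaLimit_singleton_iff_mapClusterPt atTop (fun n : ℕ => φ^[n])] at hyω ⊢
    exact mapsTo_zpow_omegaLimit φ m {x} hyω
  exact hfy ▸ mem_markovSpec_of_forall_zpow_le hyΛ hle

end Spectra

/-- For a compact invariant set `Λ` of a homeomorphism `φ` of a
metric space and a continuous function `f`, one has `L(f,Λ) ⊆ M(f,Λ)`. -/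
theorem lagrangeSpec_subset_markovSpec {M : Type*} [MetricSpace M]
    (φ : M ≃ₜ M) (Λ : Set M) (hcomp : IsCompact Λ) (hinv : φ '' Λ = Λ)
    (f : M → ℝ) (hf : Continuous f) :
    lagrangeSpec φ f Λ ⊆ markovSpec φ f Λ := by
  exact lagrangeSpec_subset_markovSpec_general hcomp (mapsTo_iff_image_subset.2 hinv.subset)
    hf.continuousOn
end
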